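/- Let (L,d,λ) be the weak Lie 3-algebra associated to an (algebraically modeled) CLWX 2-algebroid as in the context. Then the skew-symmetrization λ̄ of λ is a (semi-strict) Lie 3-algebra structure on (L,d), and its structure maps are given explicitly by: λ̄2 = (1/2)·(λ2 − λ2^{(12)}) (so λ̄2(x,y) = (1/2)(x∘y − y∘x) on E-components, λ̄2(x,f) = (1/2)·S(x,Df) and λ̄2(f,x) = −(1/2)·S(x,Df) for x ∈ E0, f ∈ R); λ̄3 = Ω − (1/12)·Σ_{σ∈S3} sgn(σ)·(λ21∘1λ2)^σ (the correction terms being built from S(e1∘e2, e3)); and λ̄4 = λ21∘1λ3, i.e. λ̄4(e1,e2,e3,e4) = S(Ω(e1,e2,e3), e4) on the relevant components. In particular these maps are skew-symmetric and satisfy the Leibniz 3-algebra equations (L1)–(L4). -/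

import Mathlib

namespace WL3

open Finset

/-! ## Graded multilinear maps -/

/-- Cast along an equality of degrees. -/
def gcast {M : ℤ → Type} {i j : ℤ} (h : i = j) (x : M i) : M j := h ▸ x

/-- A degree-`r`, arity-`m` map between ℤ-graded types, given by its components on
homogeneous tuples: its component at degrees `d` maps `L (d 1) ⊗ ⋯ ⊗ L (d m)` to
`M (r + d 1 + ⋯ + d m)`. -/
abbrev MMap (L M : ℤ → Type) (m : ℕ) (r : ℤ) : Type :=
  ∀ d : Fin m → ℤ, (∀ j, L (d j)) → M (r + ∑ j, d j)

variable {L M N : ℤ → Type}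

/-- Cast an `MMap` along equalities of arities and degrees. -/
def mcast {m m' : ℕ} {r r' : ℤ} (hm : m = m') (hr : r = r') (μ : MMap L M m r) :
    MMap L M m' r' := by subst hm; subst hr; exact μ

/-- Koszul sign of the permutation `σ` acting on a tuple of homogeneous elements of
degrees `d`: `∏_{i<j, σ i > σ j} (-1)^(d i · d j)`. -/
def koszulSign {m : ℕ} (d : Fin m → ℤ) (σ : Equiv.Perm (Fin m)) : ℤ :=
  ∏ p ∈ Finset.univ.filter (fun p : Fin m × Fin m => p.1 < p.2 ∧ σ p.2 < σ p.1),
    (-1 : ℤ) ^ (d p.1 * d p.2).natAbs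

/-- The action `μ ↦ μ^σ`, `μ^σ(x₁,…,x_m) = ε(σ;x)·μ(x_{σ⁻¹1},…,x_{σ⁻¹m})`. -/
def pa [∀ i, AddCommGroup (M i)] {m : ℕ} {r : ℤ} (σ : Equiv.Perm (Fin m)) (μ : MMap L M m r) :
    MMap L M m r := fun d x =>
  koszulSign d σ •
    gcast (by rw [Equiv.sum_comp σ.symm d])
      (μ (fun j => d (σ.symm j)) (fun j => x (σ.symm j)))

/-- Degrees of the outer map in a partial composition. -/
def outDeg (m₁ m₂ n : ℕ) (s : ℤ) (d : Fin (m₁ + n + m₂) → ℤ) : Fin (m₁ + 1 + m₂) → ℤ :=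
  Fin.append
    (Fin.append (fun j : Fin m₁ => d (Fin.castAdd m₂ (Fin.castAdd n j)))
      (fun _ : Fin 1 => s + ∑ j : Fin n, d (Fin.castAdd m₂ (Fin.natAdd m₁ j))))
    (fun j : Fin m₂ => d (Fin.natAdd (m₁ + n) j))

theorem outDeg_left (m₁ m₂ n : ℕ) (s : ℤ) (d : Fin (m₁ + n + m₂) → ℤ) (j : Fin m₁) :
    outDeg m₁ m₂ n s d (Fin.castAdd m₂ (Fin.castAdd 1 j))
      = d (Fin.castAdd m₂ (Fin.castAdd n j)) := by
  simp [outDeg, Fin.append_left]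

theorem outDeg_mid (m₁ m₂ n : ℕ) (s : ℤ) (d : Fin (m₁ + n + m₂) → ℤ) (j : Fin 1) :
    outDeg m₁ m₂ n s d (Fin.castAdd m₂ (Fin.natAdd m₁ j))
      = s + ∑ j : Fin n, d (Fin.castAdd m₂ (Fin.natAdd m₁ j)) := by
  simp [outDeg, Fin.append_left, Fin.append_right]

theorem outDeg_right (m₁ m₂ n : ℕ) (s : ℤ) (d : Fin (m₁ + n + m₂) → ℤ) (j : Fin m₂) :
    outDeg m₁ m₂ n s d (Fin.natAdd (m₁ + 1) j) = d (Fin.natAdd (m₁ + n) j) := by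
  simp [outDeg, Fin.append_right]

theorem outDeg_sum (m₁ m₂ n : ℕ) (r s : ℤ) (d : Fin (m₁ + n + m₂) → ℤ) :
    r + ∑ j, outDeg m₁ m₂ n s d j = (r + s) + ∑ j, d j := by
  simp [outDeg, Fin.sum_univ_add, Fin.append_left, Fin.append_right]
  ring

/-- Partial (operadic) composition `μ ∘_{m₁+1} ν` of `μ` (of arity `m₁ + 1 + m₂`) with `ν`
inserted in the slot `m₁ + 1`, with the Koszul sign `(-1)^(|ν|·(d 1 + ⋯ + d m₁))`. -/
def pcomp [∀ i, AddCommGroup (L i)] [∀ i, AddCommGroup (M i)] (m₁ m₂ : ℕ) {n : ℕ} {r s : ℤ}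
    (μ : MMap L M (m₁ + 1 + m₂) r) (ν : MMap L L n s) : MMap L M (m₁ + n + m₂) (r + s) :=
  fun d x =>
    ((-1 : ℤ) ^ (s * ∑ j : Fin m₁, d (Fin.castAdd m₂ (Fin.castAdd n j))).natAbs) •
    gcast (outDeg_sum m₁ m₂ n r s d)
      (μ (outDeg m₁ m₂ n s d)
        (fun j => Fin.addCases (motive := fun t => L (outDeg m₁ m₂ n s d t))
          (fun j' => Fin.addCases (motive := fun t => L (outDeg m₁ m₂ n s d (Fin.castAdd m₂ t)))
            (fun j1 => gcast (outDeg_left m₁ m₂ n s d j1).symm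
              (x (Fin.castAdd m₂ (Fin.castAdd n j1))))
            (fun j0 => gcast (outDeg_mid m₁ m₂ n s d j0).symm
              (ν (fun j2 => d (Fin.castAdd m₂ (Fin.natAdd m₁ j2)))
                 (fun j2 => x (Fin.castAdd m₂ (Fin.natAdd m₁ j2)))))
            j')
          (fun j3 => gcast (outDeg_right m₁ m₂ n s d j3).symm (x (Fin.natAdd (m₁ + n) j3)))
          j))

/-- Composition `μ ∘ g` of an arity-1 map with an arity-`a` map. -/
def comp₁ {a : ℕ} {r s : ℤ} (μ : MMap M N 1 r) (g : MMap L M a s) : MMap L N a (r + s) :=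
  fun d x =>
    gcast (by rw [Fin.sum_univ_one]; ring)
      (μ (fun _ : Fin 1 => s + ∑ j, d j) (fun _ => g d x))

theorem sum2 (a b : ℕ) (r s₁ s₂ : ℤ) (d : Fin (a + b) → ℤ) :
    r + ∑ t : Fin 2, ![s₁ + ∑ j : Fin a, d (Fin.castAdd b j),
                       s₂ + ∑ j : Fin b, d (Fin.natAdd a j)] t
      = (r + (s₁ + s₂)) + ∑ j, d j := by
  simp [Fin.sum_univ_two, Fin.sum_univ_add]
  ring

/-- Full composition `μ ∘ (g₁, g₂)` with Koszul signs. -/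
def comp₂ [∀ i, AddCommGroup (N i)] {a b : ℕ} {r s₁ s₂ : ℤ}
    (μ : MMap M N 2 r) (g₁ : MMap L M a s₁) (g₂ : MMap L M b s₂) :
    MMap L N (a + b) (r + (s₁ + s₂)) :=
  fun d x =>
    ((-1 : ℤ) ^ (s₂ * ∑ j : Fin a, d (Fin.castAdd b j)).natAbs) •
    gcast (sum2 a b r s₁ s₂ d)
      (μ ![s₁ + ∑ j : Fin a, d (Fin.castAdd b j), s₂ + ∑ j : Fin b, d (Fin.natAdd a j)]
        (Fin.cons (gcast (by simp) (g₁ (fun j => d (Fin.castAdd b j)) (fun j => x (Fin.castAdd b j))))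
          (fun _ : Fin 1 => gcast (by simp) (g₂ (fun j => d (Fin.natAdd a j)) (fun j => x (Fin.natAdd a j))))))

theorem sum3 (a b c : ℕ) (r s₁ s₂ s₃ : ℤ) (d : Fin (a + b + c) → ℤ) :
    r + ∑ t : Fin 3, ![s₁ + ∑ j : Fin a, d (Fin.castAdd c (Fin.castAdd b j)),
                       s₂ + ∑ j : Fin b, d (Fin.castAdd c (Fin.natAdd a j)),
                       s₃ + ∑ j : Fin c, d (Fin.natAdd (a + b) j)] t
      = (r + (s₁ + s₂ + s₃)) + ∑ j, d j := by
  simp [Fin.sum_univ_three, Fin.sum_univ_add]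
  ring

/-- Full composition `μ ∘ (g₁, g₂, g₃)` with Koszul signs. -/
def comp₃ [∀ i, AddCommGroup (N i)] {a b c : ℕ} {r s₁ s₂ s₃ : ℤ}
    (μ : MMap M N 3 r) (g₁ : MMap L M a s₁) (g₂ : MMap L M b s₂) (g₃ : MMap L M c s₃) :
    MMap L N (a + b + c) (r + (s₁ + s₂ + s₃)) :=
  fun d x =>
    ((-1 : ℤ) ^ (s₂ * (∑ j : Fin a, d (Fin.castAdd c (Fin.castAdd b j)))
        + s₃ * ((∑ j : Fin a, d (Fin.castAdd c (Fin.castAdd b j)))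
          + ∑ j : Fin b, d (Fin.castAdd c (Fin.natAdd a j)))).natAbs) •
    gcast (sum3 a b c r s₁ s₂ s₃ d)
      (μ ![s₁ + ∑ j : Fin a, d (Fin.castAdd c (Fin.castAdd b j)),
           s₂ + ∑ j : Fin b, d (Fin.castAdd c (Fin.natAdd a j)),
           s₃ + ∑ j : Fin c, d (Fin.natAdd (a + b) j)]
        (Fin.cons (gcast (by simp)
            (g₁ (fun j => d (Fin.castAdd c (Fin.castAdd b j)))
                (fun j => x (Fin.castAdd c (Fin.castAdd b j)))))
          (Fin.cons (gcast (by simp)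
              (g₂ (fun j => d (Fin.castAdd c (Fin.natAdd a j)))
                  (fun j => x (Fin.castAdd c (Fin.natAdd a j)))))
            (fun _ : Fin 1 => gcast (by simp)
              (g₃ (fun j => d (Fin.natAdd (a + b) j))
                  (fun j => x (Fin.natAdd (a + b) j)))))))

theorem sum4 (a b c e : ℕ) (r s₁ s₂ s₃ s₄ : ℤ) (d : Fin (a + b + c + e) → ℤ) :
    r + ∑ t : Fin 4, ![s₁ + ∑ j : Fin a, d (Fin.castAdd e (Fin.castAdd c (Fin.castAdd b j))),
                       s₂ + ∑ j : Fin b, d (Fin.castAdd e (Fin.castAdd c (Fin.natAdd a j))),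
                       s₃ + ∑ j : Fin c, d (Fin.castAdd e (Fin.natAdd (a + b) j)),
                       s₄ + ∑ j : Fin e, d (Fin.natAdd (a + b + c) j)] t
      = (r + (s₁ + s₂ + s₃ + s₄)) + ∑ j, d j := by
  simp [Fin.sum_univ_four, Fin.sum_univ_add]
  ring

/-- Full composition `μ ∘ (g₁, g₂, g₃, g₄)` with Koszul signs. -/
def comp₄ [∀ i, AddCommGroup (N i)] {a b c e : ℕ} {r s₁ s₂ s₃ s₄ : ℤ}
    (μ : MMap M N 4 r) (g₁ : MMap L M a s₁) (g₂ : MMap L M b s₂) (g₃ : MMap L M c s₃)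
    (g₄ : MMap L M e s₄) :
    MMap L N (a + b + c + e) (r + (s₁ + s₂ + s₃ + s₄)) :=
  fun d x =>
    ((-1 : ℤ) ^ (s₂ * (∑ j : Fin a, d (Fin.castAdd e (Fin.castAdd c (Fin.castAdd b j))))
        + s₃ * ((∑ j : Fin a, d (Fin.castAdd e (Fin.castAdd c (Fin.castAdd b j))))
          + ∑ j : Fin b, d (Fin.castAdd e (Fin.castAdd c (Fin.natAdd a j))))
        + s₄ * ((∑ j : Fin a, d (Fin.castAdd e (Fin.castAdd c (Fin.castAdd b j))))
          + (∑ j : Fin b, d (Fin.castAdd e (Fin.castAdd c (Fin.natAdd a j))))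
          + ∑ j : Fin c, d (Fin.castAdd e (Fin.natAdd (a + b) j)))).natAbs) •
    gcast (sum4 a b c e r s₁ s₂ s₃ s₄ d)
      (μ ![s₁ + ∑ j : Fin a, d (Fin.castAdd e (Fin.castAdd c (Fin.castAdd b j))),
           s₂ + ∑ j : Fin b, d (Fin.castAdd e (Fin.castAdd c (Fin.natAdd a j))),
           s₃ + ∑ j : Fin c, d (Fin.castAdd e (Fin.natAdd (a + b) j)),
           s₄ + ∑ j : Fin e, d (Fin.natAdd (a + b + c) j)]
        (Fin.cons (gcast (by simp)
            (g₁ (fun j => d (Fin.castAdd e (Fin.castAdd c (Fin.castAdd b j))))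
                (fun j => x (Fin.castAdd e (Fin.castAdd c (Fin.castAdd b j))))))
          (Fin.cons (gcast (by simp)
              (g₂ (fun j => d (Fin.castAdd e (Fin.castAdd c (Fin.natAdd a j))))
                  (fun j => x (Fin.castAdd e (Fin.castAdd c (Fin.natAdd a j))))))
            (Fin.cons (gcast (by simp)
                (g₃ (fun j => d (Fin.castAdd e (Fin.natAdd (a + b) j)))
                    (fun j => x (Fin.castAdd e (Fin.natAdd (a + b) j)))))
              (fun _ : Fin 1 => gcast (by simp)
                (g₄ (fun j => d (Fin.natAdd (a + b + c) j))
                    (fun j => x (Fin.natAdd (a + b + c) j))))))))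

/-- The differential `∂(μ) = D' ∘ μ - (-1)^{|μ|} ∑ᵢ μ ∘ᵢ D`. -/
def bdry [∀ i, AddCommGroup (L i)] [∀ i, AddCommGroup (M i)] {m : ℕ} {r : ℤ}
    (D' : MMap M M 1 (-1)) (D : MMap L L 1 (-1)) (μ : MMap L M m r) : MMap L M m (-1 + r) :=
  comp₁ D' μ - ((-1 : ℤ) ^ r.natAbs) •
    ∑ p : Fin m, mcast (by have := p.isLt; omega) (by ring)
      (pcomp p.val (m - 1 - p.val) (mcast (by have := p.isLt; omega) rfl μ) D)

/-- The identity, as an `MMap`. -/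
def idm : MMap L L 1 0 := fun d x => gcast (by rw [Fin.sum_univ_one, zero_add]) (x 0)

/-- `μ ∘_{m₁+1} ν`, recast to a specified target degree `R`. -/
def pc [∀ i, AddCommGroup (L i)] [∀ i, AddCommGroup (M i)] (R : ℤ) (m₁ m₂ : ℕ) {n : ℕ}
    {r s : ℤ} (μ : MMap L M (m₁ + 1 + m₂) r) (ν : MMap L L n s)
    (h : r + s = R := by norm_num) : MMap L M (m₁ + n + m₂) R :=
  mcast rfl h (pcomp m₁ m₂ μ ν)

/-- `μ ∘ g`, recast to a specified target degree `R`. -/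
def fc1 (R : ℤ) {a : ℕ} {r s : ℤ} (μ : MMap M N 1 r) (g : MMap L M a s)
    (h : r + s = R := by norm_num) : MMap L N a R :=
  mcast rfl h (comp₁ μ g)

/-- `μ ∘ (g₁, g₂)`, recast to a specified target degree `R`. -/
def fc2 [∀ i, AddCommGroup (N i)] (R : ℤ) {a b : ℕ} {r s₁ s₂ : ℤ}
    (μ : MMap M N 2 r) (g₁ : MMap L M a s₁) (g₂ : MMap L M b s₂)
    (h : r + (s₁ + s₂) = R := by norm_num) : MMap L N (a + b) R :=
  mcast rfl h (comp₂ μ g₁ g₂)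

/-- `μ ∘ (g₁, g₂, g₃)`, recast to a specified target degree `R`. -/
def fc3 [∀ i, AddCommGroup (N i)] (R : ℤ) {a b c : ℕ} {r s₁ s₂ s₃ : ℤ}
    (μ : MMap M N 3 r) (g₁ : MMap L M a s₁) (g₂ : MMap L M b s₂) (g₃ : MMap L M c s₃)
    (h : r + (s₁ + s₂ + s₃) = R := by norm_num) : MMap L N (a + b + c) R :=
  mcast rfl h (comp₃ μ g₁ g₂ g₃)

/-- `μ ∘ (g₁, g₂, g₃, g₄)`, recast to a specified target degree `R`. -/
def fc4 [∀ i, AddCommGroup (N i)] (R : ℤ) {a b c e : ℕ} {r s₁ s₂ s₃ s₄ : ℤ}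
    (μ : MMap M N 4 r) (g₁ : MMap L M a s₁) (g₂ : MMap L M b s₂) (g₃ : MMap L M c s₃)
    (g₄ : MMap L M e s₄) (h : r + (s₁ + s₂ + s₃ + s₄) = R := by norm_num) :
    MMap L N (a + b + c + e) R :=
  mcast rfl h (comp₄ μ g₁ g₂ g₃ g₄)

/-- `∂(μ)`, recast to a specified target degree `R`. -/
def bd [∀ i, AddCommGroup (L i)] [∀ i, AddCommGroup (M i)] (R : ℤ) {m : ℕ} {r : ℤ}
    (D' : MMap M M 1 (-1)) (D : MMap L L 1 (-1)) (μ : MMap L M m r)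
    (h : -1 + r = R := by norm_num) : MMap L M m R :=
  mcast rfl h (bdry D' D μ)

/-- Multilinearity over `k` of the components of an `MMap`. -/
def IsMultilinear (k : Type) [CommRing k] {L M : ℤ → Type} [∀ i, AddCommGroup (L i)]
    [∀ i, AddCommGroup (M i)] [∀ i, Module k (L i)] [∀ i, Module k (M i)] {m : ℕ} {r : ℤ}
    (μ : MMap L M m r) : Prop :=
  ∀ (d : Fin m → ℤ) (x : ∀ j, L (d j)) (j : Fin m),
    (∀ a b : L (d j), μ d (Function.update x j (a + b))
        = μ d (Function.update x j a) + μ d (Function.update x j b)) ∧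
    (∀ (c : k) (a : L (d j)), μ d (Function.update x j (c • a)) = c • μ d (Function.update x j a))

/-! ## Permutations (0-indexed; a cycle `(a b c)` is `swap a b * swap b c`) -/

def P12 (m : ℕ) [NeZero m] : Equiv.Perm (Fin m) := Equiv.swap 0 1
def P13 (m : ℕ) [NeZero m] : Equiv.Perm (Fin m) := Equiv.swap 0 2
def P23 (m : ℕ) [NeZero m] : Equiv.Perm (Fin m) := Equiv.swap 1 2
def P34 (m : ℕ) [NeZero m] : Equiv.Perm (Fin m) := Equiv.swap 2 3
def P123 (m : ℕ) [NeZero m] : Equiv.Perm (Fin m) := Equiv.swap 0 1 * Equiv.swap 1 2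
def P132 (m : ℕ) [NeZero m] : Equiv.Perm (Fin m) := Equiv.swap 0 2 * Equiv.swap 2 1
def P234 (m : ℕ) [NeZero m] : Equiv.Perm (Fin m) := Equiv.swap 1 2 * Equiv.swap 2 3
def P243 (m : ℕ) [NeZero m] : Equiv.Perm (Fin m) := Equiv.swap 1 3 * Equiv.swap 3 2
def P1234 (m : ℕ) [NeZero m] : Equiv.Perm (Fin m) :=
  Equiv.swap 0 1 * Equiv.swap 1 2 * Equiv.swap 2 3
def P1432 (m : ℕ) [NeZero m] : Equiv.Perm (Fin m) :=
  Equiv.swap 0 3 * Equiv.swap 3 2 * Equiv.swap 2 1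
def P1342 (m : ℕ) [NeZero m] : Equiv.Perm (Fin m) :=
  Equiv.swap 0 2 * Equiv.swap 2 3 * Equiv.swap 3 1
def P13P24 (m : ℕ) [NeZero m] : Equiv.Perm (Fin m) := Equiv.swap 0 2 * Equiv.swap 1 3

end WL3
namespace WL3

open Finset

variable (k : Type) [CommRing k]

/-- A Leibniz 3-algebra structure: maps `l2, l3, l4` on a complex with differential `D`
satisfying the generalized Jacobi identities (L1)–(L4). -/
structure IsLeibniz3 {L : ℤ → Type} [∀ i, AddCommGroup (L i)] [∀ i, Module k (L i)]
    (D : MMap L L 1 (-1)) (l2 : MMap L L 2 0) (l3 : MMap L L 3 1) (l4 : MMap L L 4 2) :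
    Prop where
  lin2 : IsMultilinear k l2
  lin3 : IsMultilinear k l3
  lin4 : IsMultilinear k l4
  eqL1 : bd (-1) D D l2 = 0
  eqL2 : bd 0 D D l3 =
    pc 0 1 0 l2 l2 - pc 0 0 1 l2 l2 - pa (P12 3) (pc 0 1 0 l2 l2)
  eqL3 : bd 1 D D l4 =
    pc 1 0 1 l2 l3 + pc 1 1 0 l2 l3 - pa (P12 4) (pc 1 1 0 l2 l3)
      + pa (P123 4) (pc 1 1 0 l2 l3) - pc 1 0 2 l3 l2
      + pc 1 1 1 l3 l2 - pa (P12 4) (pc 1 1 1 l3 l2)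
      - pc 1 2 0 l3 l2 + pa (P23 4) (pc 1 2 0 l3 l2) - pa (P132 4) (pc 1 2 0 l3 l2)
  eqL4 : (0 : MMap L L 5 2) =
    pc 2 0 1 l2 l4 - pc 2 1 0 l2 l4 + pa (P12 5) (pc 2 1 0 l2 l4)
      - pa (P123 5) (pc 2 1 0 l2 l4) + pa (P1234 5) (pc 2 1 0 l2 l4)
      + pc 2 0 2 l3 l3 + pc 2 1 1 l3 l3 - pa (P12 5) (pc 2 1 1 l3 l3)
      + pa (P123 5) (pc 2 1 1 l3 l3) + pc 2 2 0 l3 l3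
      - pa (P23 5) (pc 2 2 0 l3 l3) + pa (P132 5) (pc 2 2 0 l3 l3)
      + pa (P234 5) (pc 2 2 0 l3 l3) - pa (P1342 5) (pc 2 2 0 l3 l3)
      + pa (P13P24 5) (pc 2 2 0 l3 l3)
      + pc 2 0 3 l4 l2 - pc 2 1 2 l4 l2 + pa (P12 5) (pc 2 1 2 l4 l2)
      + pc 2 2 1 l4 l2 - pa (P23 5) (pc 2 2 1 l4 l2) + pa (P132 5) (pc 2 2 1 l4 l2)
      - pc 2 3 0 l4 l2 + pa (P34 5) (pc 2 3 0 l4 l2) - pa (P243 5) (pc 2 3 0 l4 l2)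
      + pa (P1432 5) (pc 2 3 0 l4 l2)

/-- A weak Lie 3-algebra: a 3-term chain complex equipped with structure maps
`l2, l3, l4, l21, l211, l31, l32` satisfying (L1)–(L4) and (W1)–(W11). -/
structure WeakLie3 (L : ℤ → Type) [∀ i, AddCommGroup (L i)] [∀ i, Module k (L i)] where
  D : MMap L L 1 (-1)
  linD : IsMultilinear k D
  dd : fc1 (-2) D D = 0
  bound : ∀ i : ℤ, (i < 0 ∨ 2 < i) → ∀ x : L i, x = 0
  l2 : MMap L L 2 0
  l3 : MMap L L 3 1
  l4 : MMap L L 4 2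
  l21 : MMap L L 2 1
  l211 : MMap L L 2 2
  l31 : MMap L L 3 2
  l32 : MMap L L 3 2
  leib : IsLeibniz3 k D l2 l3 l4
  lin21 : IsMultilinear k l21
  lin211 : IsMultilinear k l211
  lin31 : IsMultilinear k l31
  lin32 : IsMultilinear k l32
  w1 : bd 0 D D l21 = l2 + pa (P12 2) l2
  w2 : bd 1 D D l211 = l21 - pa (P12 2) l21
  w3 : bd 1 D D l31 = l3 + pa (P12 3) l3 + pc 1 0 1 l2 l21
  w4 : bd 1 D D l32 = l3 + pa (P23 3) l3 - pc 1 1 0 l2 l21 + pc 1 0 1 l21 l2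
        + pa (P12 3) (pc 1 1 0 l21 l2)
  w5 : l211 + pa (P12 2) l211 = 0
  w6 : l31 - pa (P12 3) l31 = pc 2 0 1 l2 l211
  w7 : l31 - pa (P12 3) l32 + pa (P132 3) l31 - l32 + pa (P23 3) l31 - pa (P123 3) l32
        = pc 2 1 0 l21 l21 + pc 2 0 1 l21 l21 + pa (P12 3) (pc 2 1 0 l21 l21)
          + pa (P132 3) (pc 2 1 0 l211 l2)
  w8 : l32 - pa (P23 3) l32 = - pc 2 1 0 l2 l211 + pc 2 0 1 l211 l2
        + pa (P12 3) (pc 2 1 0 l211 l2)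
  w9 : l4 + pa (P12 4) l4 = pc 2 0 1 l2 l31 - pc 2 2 0 l31 l2
        + pa (P123 4) (pc 2 1 0 l2 l31) + pc 2 0 2 l3 l21
  w10 : l4 + pa (P23 4) l4 = pc 2 0 1 l2 l32 - pc 2 1 1 l3 l21 + pc 2 1 0 l2 l31
        - pc 2 0 2 l31 l2 - pa (P12 4) (pc 2 1 1 l31 l2) - pa (P132 4) (pc 2 2 0 l31 l2)
  w11 : l4 + pa (P34 4) l4 = pc 2 0 1 l21 l3 - pc 2 0 2 l32 l2 + pc 2 1 1 l32 l2
        - pa (P12 4) (pc 2 1 1 l32 l2) + pc 2 2 0 l3 l21 + pa (P23 4) (pc 2 2 0 l32 l2)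
        - pa (P132 4) (pc 2 2 0 l32 l2) + pc 2 1 0 l2 l32 - pa (P12 4) (pc 2 1 0 l2 l32)
        + pa (P123 4) (pc 2 1 0 l21 l3)

end WL3
namespace WL3

open Finset

variable (k : Type) [CommRing k]

/-- A weak morphism of weak Lie 3-algebras `(f1,f2,f21,f3) : A → B`, i.e. a solution of
equations (M1)–(M8). -/
structure IsWeakMorphism {L M : ℤ → Type} [∀ i, AddCommGroup (L i)] [∀ i, Module k (L i)]
    [∀ i, AddCommGroup (M i)] [∀ i, Module k (M i)]
    (A : WeakLie3 k L) (B : WeakLie3 k M)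
    (f1 : MMap L M 1 0) (f2 : MMap L M 2 1) (f21 : MMap L M 2 2) (f3 : MMap L M 3 2) :
    Prop where
  lin1 : IsMultilinear k f1
  lin2 : IsMultilinear k f2
  lin21 : IsMultilinear k f21
  lin3 : IsMultilinear k f3
  m1 : bd (-1) B.D A.D f1 = 0
  m2 : bd 0 B.D A.D f2 = fc1 0 f1 A.l2 - fc2 0 B.l2 f1 f1
  m3 : bd 1 B.D A.D f3 = fc1 1 f1 A.l3 - pc 1 1 0 f2 A.l2 + pc 1 0 1 f2 A.l2
        + pa (P12 3) (pc 1 1 0 f2 A.l2) - fc3 1 B.l3 f1 f1 f1 - fc2 1 B.l2 f1 f2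
        + fc2 1 B.l2 f2 f1 + pa (P12 3) (fc2 1 B.l2 f1 f2)
  m4 : fc1 2 f1 A.l4 - fc4 2 B.l4 f1 f1 f1 f1 =
        pc 2 0 1 f2 A.l3 + pc 2 1 0 f2 A.l3 - pa (P12 4) (pc 2 1 0 f2 A.l3)
        + pa (P123 4) (pc 2 1 0 f2 A.l3) - pc 2 0 2 f3 A.l2 + pc 2 1 1 f3 A.l2
        - pa (P12 4) (pc 2 1 1 f3 A.l2) - pc 2 2 0 f3 A.l2 + pa (P23 4) (pc 2 2 0 f3 A.l2)
        - pa (P132 4) (pc 2 2 0 f3 A.l2) + fc2 2 B.l2 f3 f1 + fc2 2 B.l2 f1 f3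
        - pa (P12 4) (fc2 2 B.l2 f1 f3) + pa (P123 4) (fc2 2 B.l2 f1 f3)
        - fc2 2 B.l2 f2 f2 + pa (P23 4) (fc2 2 B.l2 f2 f2) - pa (P132 4) (fc2 2 B.l2 f2 f2)
        + fc3 2 B.l3 f2 f1 f1 - fc3 2 B.l3 f1 f2 f1 + pa (P12 4) (fc3 2 B.l3 f1 f2 f1)
        + fc3 2 B.l3 f1 f1 f2 - pa (P23 4) (fc3 2 B.l3 f1 f1 f2)
        + pa (P132 4) (fc3 2 B.l3 f1 f1 f2)
  m5 : bd 1 B.D A.D f21 = - f2 - pa (P12 2) f2 + fc1 1 f1 A.l21 - fc2 1 B.l21 f1 f1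
  m6 : fc1 2 f1 A.l211 - fc2 2 B.l211 f1 f1 = f21 - pa (P12 2) f21
  m7 : fc1 2 f1 A.l31 - fc3 2 B.l31 f1 f1 f1 =
        f3 + pa (P12 3) f3 + pc 2 0 1 f2 A.l21 + fc2 2 B.l2 f21 f1
  m8 : fc1 2 f1 A.l32 - fc3 2 B.l32 f1 f1 f1 =
        f3 + pa (P23 3) f3 - pc 2 1 0 f2 A.l21 + pc 2 0 1 f21 A.l2
        + pa (P12 3) (pc 2 1 0 f21 A.l2) - fc2 2 B.l2 f1 f21 - fc2 2 B.l21 f2 f1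
        - pa (P12 3) (fc2 2 B.l21 f1 f2)

/-- A morphism of (semi-strict) Lie 3-algebras / Leibniz 3-algebras: equations (M1)–(M4)
for structure maps `(a2,a3,a4)` on the source and `(b2,b3,b4)` on the target. -/
structure IsLeibMorphism {L M : ℤ → Type} [∀ i, AddCommGroup (L i)] [∀ i, Module k (L i)]
    [∀ i, AddCommGroup (M i)] [∀ i, Module k (M i)]
    (DL : MMap L L 1 (-1)) (DM : MMap M M 1 (-1))
    (a2 : MMap L L 2 0) (a3 : MMap L L 3 1) (a4 : MMap L L 4 2)
    (b2 : MMap M M 2 0) (b3 : MMap M M 3 1) (b4 : MMap M M 4 2)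
    (f1 : MMap L M 1 0) (f2 : MMap L M 2 1) (f3 : MMap L M 3 2) : Prop where
  lin1 : IsMultilinear k f1
  lin2 : IsMultilinear k f2
  lin3 : IsMultilinear k f3
  m1 : bd (-1) DM DL f1 = 0
  m2 : bd 0 DM DL f2 = fc1 0 f1 a2 - fc2 0 b2 f1 f1
  m3 : bd 1 DM DL f3 = fc1 1 f1 a3 - pc 1 1 0 f2 a2 + pc 1 0 1 f2 a2
        + pa (P12 3) (pc 1 1 0 f2 a2) - fc3 1 b3 f1 f1 f1 - fc2 1 b2 f1 f2
        + fc2 1 b2 f2 f1 + pa (P12 3) (fc2 1 b2 f1 f2)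
  m4 : fc1 2 f1 a4 - fc4 2 b4 f1 f1 f1 f1 =
        pc 2 0 1 f2 a3 + pc 2 1 0 f2 a3 - pa (P12 4) (pc 2 1 0 f2 a3)
        + pa (P123 4) (pc 2 1 0 f2 a3) - pc 2 0 2 f3 a2 + pc 2 1 1 f3 a2
        - pa (P12 4) (pc 2 1 1 f3 a2) - pc 2 2 0 f3 a2 + pa (P23 4) (pc 2 2 0 f3 a2)
        - pa (P132 4) (pc 2 2 0 f3 a2) + fc2 2 b2 f3 f1 + fc2 2 b2 f1 f3
        - pa (P12 4) (fc2 2 b2 f1 f3) + pa (P123 4) (fc2 2 b2 f1 f3)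
        - fc2 2 b2 f2 f2 + pa (P23 4) (fc2 2 b2 f2 f2) - pa (P132 4) (fc2 2 b2 f2 f2)
        + fc3 2 b3 f2 f1 f1 - fc3 2 b3 f1 f2 f1 + pa (P12 4) (fc3 2 b3 f1 f2 f1)
        + fc3 2 b3 f1 f1 f2 - pa (P23 4) (fc3 2 b3 f1 f1 f2)
        + pa (P132 4) (fc3 2 b3 f1 f1 f2)

/-- A deformation retract `(p, i, h)` of `(L, D)` onto `(L', D')`:
`p`, `i` are chain maps, `id - i∘p = D∘h + h∘D` and `p∘i = id`. -/
structure IsDefRetract {L L' : ℤ → Type} [∀ i, AddCommGroup (L i)] [∀ i, Module k (L i)]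
    [∀ i, AddCommGroup (L' i)] [∀ i, Module k (L' i)]
    (D : MMap L L 1 (-1)) (D' : MMap L' L' 1 (-1))
    (p : MMap L L' 1 0) (i : MMap L' L 1 0) (h : MMap L L 1 1) : Prop where
  linp : IsMultilinear k p
  lini : IsMultilinear k i
  linh : IsMultilinear k h
  chainp : bd (-1) D' D p = 0
  chaini : bd (-1) D D' i = 0
  homotopy : idm - fc1 0 i p = fc1 0 D h + fc1 0 h D
  retract : fc1 0 p i = idm

/-- A weak Lie 2-algebra in the sense of Roytenberg (a 2-term truncation of a weak
Lie 3-algebra). -/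
structure WeakLie2 (L : ℤ → Type) [∀ i, AddCommGroup (L i)] [∀ i, Module k (L i)] where
  D : MMap L L 1 (-1)
  linD : IsMultilinear k D
  dd : fc1 (-2) D D = 0
  bound : ∀ i : ℤ, (i < 0 ∨ 1 < i) → ∀ x : L i, x = 0
  l2 : MMap L L 2 0
  l3 : MMap L L 3 1
  l21 : MMap L L 2 1
  lin2 : IsMultilinear k l2
  lin3 : IsMultilinear k l3
  lin21 : IsMultilinear k l21
  e1 : bd (-1) D D l2 = 0
  e2 : bd 0 D D l3 = pc 0 1 0 l2 l2 - pc 0 0 1 l2 l2 - pa (P12 3) (pc 0 1 0 l2 l2)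
  e3 : (0 : MMap L L 4 1) =
    pc 1 0 1 l2 l3 + pc 1 1 0 l2 l3 - pa (P12 4) (pc 1 1 0 l2 l3)
      + pa (P123 4) (pc 1 1 0 l2 l3) - pc 1 0 2 l3 l2
      + pc 1 1 1 l3 l2 - pa (P12 4) (pc 1 1 1 l3 l2)
      - pc 1 2 0 l3 l2 + pa (P23 4) (pc 1 2 0 l3 l2) - pa (P132 4) (pc 1 2 0 l3 l2)
  e4 : bd 0 D D l21 = l2 + pa (P12 2) l2
  e5 : (0 : MMap L L 2 1) = l21 - pa (P12 2) l21
  e6 : (0 : MMap L L 3 1) = l3 + pa (P12 3) l3 + pc 1 0 1 l2 l21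
  e7 : (0 : MMap L L 3 1) = l3 + pa (P23 3) l3 - pc 1 1 0 l2 l21 + pc 1 0 1 l21 l2
        + pa (P12 3) (pc 1 1 0 l21 l2)

end WL3
namespace WL3

open Finset

section Transfer

variable {k : Type} [CommRing k] {L L' : ℤ → Type}
  [∀ i, AddCommGroup (L i)] [∀ i, Module k (L i)]
  [∀ i, AddCommGroup (L' i)] [∀ i, Module k (L' i)]
variable (A : WeakLie3 k L) (p : MMap L L' 1 0) (i : MMap L' L 1 0) (h : MMap L L 1 1)

/-- `h ∘ λ2` -/
def hl2 : MMap L L 2 1 := fc1 1 h A.l2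
/-- `h ∘ λ3` -/
def hl3 : MMap L L 3 2 := fc1 2 h A.l3
/-- `h ∘ λ21` -/
def hl21 : MMap L L 2 2 := fc1 2 h A.l21

/-- Transferred `λ2' = p ∘ λ2 ∘ (i,i)`. -/
def tl2 : MMap L' L' 2 0 := fc1 0 p (fc2 0 A.l2 i i)

/-- Transferred `λ3'`. -/
def tl3 : MMap L' L' 3 1 :=
  fc1 1 p (fc3 1 A.l3 i i i)
  + fc1 1 p (fc3 1 (pc 1 0 1 A.l2 (hl2 A h)
      - (pc 1 1 0 A.l2 (hl2 A h) - pa (P12 3) (pc 1 1 0 A.l2 (hl2 A h)))) i i i)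

/-- Transferred `λ4'`. -/
def tl4 : MMap L' L' 4 2 :=
  fc1 2 p (fc4 2 A.l4 i i i i)
  - fc1 2 p (fc4 2
      (pc 2 0 1 A.l2 (hl3 A h)
        + (pc 2 1 0 A.l2 (hl3 A h) - pa (P12 4) (pc 2 1 0 A.l2 (hl3 A h))
            + pa (P123 4) (pc 2 1 0 A.l2 (hl3 A h)))
        + pc 2 0 2 A.l3 (hl2 A h)
        - (pc 2 1 1 A.l3 (hl2 A h) - pa (P12 4) (pc 2 1 1 A.l3 (hl2 A h)))
        + (pc 2 2 0 A.l3 (hl2 A h) - pa (P23 4) (pc 2 2 0 A.l3 (hl2 A h))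
            + pa (P132 4) (pc 2 2 0 A.l3 (hl2 A h)))) i i i i)
  - fc1 2 p (fc4 2
      (pc 2 0 2 (pc 1 0 1 A.l2 (hl2 A h)) (hl2 A h)
        - (pc 2 1 1 (pc 1 0 1 A.l2 (hl2 A h)) (hl2 A h)
            - pa (P12 4) (pc 2 1 1 (pc 1 0 1 A.l2 (hl2 A h)) (hl2 A h)))
        + (fc2 2 A.l2 (hl2 A h) (hl2 A h) - pa (P23 4) (fc2 2 A.l2 (hl2 A h) (hl2 A h))
            + pa (P132 4) (fc2 2 A.l2 (hl2 A h) (hl2 A h)))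
        + (pc 2 1 1 (pc 1 1 0 A.l2 (hl2 A h)) (hl2 A h)
            - pa (P12 4) (pc 2 1 1 (pc 1 1 0 A.l2 (hl2 A h)) (hl2 A h))
            + pa (P123 4) (pc 2 1 1 (pc 1 1 0 A.l2 (hl2 A h)) (hl2 A h)))
        - (pc 2 2 0 (pc 1 1 0 A.l2 (hl2 A h)) (hl2 A h)
            - pa (P12 4) (pc 2 2 0 (pc 1 1 0 A.l2 (hl2 A h)) (hl2 A h))
            + pa (P123 4) (pc 2 2 0 (pc 1 1 0 A.l2 (hl2 A h)) (hl2 A h))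
            - pa (P23 4) (pc 2 2 0 (pc 1 1 0 A.l2 (hl2 A h)) (hl2 A h))
            + pa (P132 4) (pc 2 2 0 (pc 1 1 0 A.l2 (hl2 A h)) (hl2 A h))
            - pa (P13 4) (pc 2 2 0 (pc 1 1 0 A.l2 (hl2 A h)) (hl2 A h)))) i i i i)

/-- Transferred `λ21' = p ∘ λ21 ∘ (i,i)`. -/
def tl21 : MMap L' L' 2 1 := fc1 1 p (fc2 1 A.l21 i i)

/-- Transferred `λ211' = p ∘ λ211 ∘ (i,i)`. -/
def tl211 : MMap L' L' 2 2 := fc1 2 p (fc2 2 A.l211 i i)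

/-- Transferred `λ31'`. -/
def tl31 : MMap L' L' 3 2 :=
  fc1 2 p (fc3 2 A.l31 i i i) - fc1 2 p (fc3 2 (pc 2 0 1 A.l2 (hl21 A h)) i i i)

/-- Transferred `λ32'`. -/
def tl32 : MMap L' L' 3 2 :=
  fc1 2 p (fc3 2 A.l32 i i i)
  + fc1 2 p (fc3 2 (pc 2 0 1 A.l21 (hl2 A h) + pc 2 1 0 A.l2 (hl21 A h)
      + pa (P12 3) (pc 2 1 0 A.l21 (hl2 A h))) i i i)

/-- Extension of `i`: `i₂ = -h ∘ λ2 ∘ (i,i)`. -/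
def ti2 : MMap L' L 2 1 := - fc1 1 h (fc2 0 A.l2 i i)

/-- Extension of `i`: `i₂₁ = -h ∘ λ21 ∘ (i,i)`. -/
def ti21 : MMap L' L 2 2 := - fc1 2 h (fc2 1 A.l21 i i)

/-- Extension of `i`: `i₃`. -/
def ti3 : MMap L' L 3 2 :=
  - fc1 2 h (fc3 1 A.l3 i i i)
  - fc1 2 h (fc3 1 (pc 1 0 1 A.l2 (hl2 A h)
      - (pc 1 1 0 A.l2 (hl2 A h) - pa (P12 3) (pc 1 1 0 A.l2 (hl2 A h)))) i i i)

end Transfer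

section Skew

variable (k : Type) [CommRing k] [Invertible (2 : k)] [Invertible (3 : k)]
variable {L M : ℤ → Type} [∀ i, AddCommGroup (L i)] [∀ i, Module k (L i)]
  [∀ i, AddCommGroup (M i)] [∀ i, Module k (M i)]

/-- Skew-symmetrization `λ̄2` of a weak Lie 3-algebra. -/
def skew2 (A : WeakLie3 k L) : MMap L L 2 0 :=
  (⅟ (2 : k)) • ∑ σ : Equiv.Perm (Fin 2), (Equiv.Perm.sign σ : ℤ) • pa σ A.l2

/-- Skew-symmetrization `λ̄3` of a weak Lie 3-algebra. -/
def skew3 (A : WeakLie3 k L) : MMap L L 3 1 :=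
  (⅟ (2 : k) * ⅟ (3 : k)) • ∑ σ : Equiv.Perm (Fin 3), (Equiv.Perm.sign σ : ℤ) • pa σ A.l3
  - (⅟ (2 : k) * ⅟ (2 : k) * ⅟ (2 : k) * ⅟ (3 : k)) •
      ∑ σ : Equiv.Perm (Fin 3), (Equiv.Perm.sign σ : ℤ) •
        pa σ (pc 1 0 1 A.l21 A.l2 + pc 1 1 0 A.l21 A.l2)

/-- Skew-symmetrization `λ̄4` of a weak Lie 3-algebra. -/
def skew4 (A : WeakLie3 k L) : MMap L L 4 2 :=
  (⅟ (2 : k) * ⅟ (2 : k) * ⅟ (2 : k) * ⅟ (3 : k)) •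
      ∑ σ : Equiv.Perm (Fin 4), (Equiv.Perm.sign σ : ℤ) • pa σ A.l4
  + (⅟ (2 : k) * ⅟ (2 : k) * ⅟ (2 : k) * ⅟ (2 : k) * ⅟ (3 : k)) •
      ∑ σ : Equiv.Perm (Fin 4), (Equiv.Perm.sign σ : ℤ) •
        pa σ (pc 2 0 1 A.l21 A.l3 - pc 2 0 2 A.l31 A.l2 + pc 2 1 1 A.l32 A.l2
          - pc 2 1 0 A.l21 A.l3 - pc 2 1 1 A.l31 A.l2 + pc 2 2 0 A.l32 A.l2)

/-- Skew-symmetrization `f̄2` of the second component of a weak morphism. -/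
def skewMor2 (f2 : MMap L M 2 1) : MMap L M 2 1 :=
  (⅟ (2 : k)) • ∑ σ : Equiv.Perm (Fin 2), (Equiv.Perm.sign σ : ℤ) • pa σ f2

/-- Skew-symmetrization `f̄3` of the third component of a weak morphism `A → B`. -/
def skewMor3 (A : WeakLie3 k L) (B : WeakLie3 k M) (f1 : MMap L M 1 0) (f2 : MMap L M 2 1)
    (f21 : MMap L M 2 2) (f3 : MMap L M 3 2) : MMap L M 3 2 :=
  (⅟ (2 : k) * ⅟ (3 : k)) • ∑ σ : Equiv.Perm (Fin 3), (Equiv.Perm.sign σ : ℤ) • pa σ f3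
  - (⅟ (2 : k) * ⅟ (2 : k) * ⅟ (2 : k) * ⅟ (3 : k)) •
      ∑ σ : Equiv.Perm (Fin 3), (Equiv.Perm.sign σ : ℤ) •
        pa σ (pc 2 0 1 f21 A.l2 + pc 2 1 0 f21 A.l2
          - fc2 2 B.l21 f2 f1 - fc2 2 B.l21 f1 f2)

end Skew

section Comp

variable {k : Type} [CommRing k] {L M N : ℤ → Type}
  [∀ i, AddCommGroup (L i)] [∀ i, Module k (L i)]
  [∀ i, AddCommGroup (M i)] [∀ i, Module k (M i)]
  [∀ i, AddCommGroup (N i)] [∀ i, Module k (N i)]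

/-- First component of the composition of weak morphisms. -/
def cmp1 (f1' : MMap M N 1 0) (f1 : MMap L M 1 0) : MMap L N 1 0 := fc1 0 f1' f1

/-- Second component of the composition of weak morphisms. -/
def cmp2 (f1' : MMap M N 1 0) (f2' : MMap M N 2 1) (f1 : MMap L M 1 0) (f2 : MMap L M 2 1) :
    MMap L N 2 1 := fc2 1 f2' f1 f1 + fc1 1 f1' f2

/-- `(f'∘f)21` component of the composition of weak morphisms. -/
def cmp21 (f1' : MMap M N 1 0) (f21' : MMap M N 2 2) (f1 : MMap L M 1 0)
    (f21 : MMap L M 2 2) : MMap L N 2 2 := fc2 2 f21' f1 f1 + fc1 2 f1' f21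

/-- Third component of the composition of weak morphisms. -/
def cmp3 (f1' : MMap M N 1 0) (f2' : MMap M N 2 1) (f3' : MMap M N 3 2)
    (f1 : MMap L M 1 0) (f2 : MMap L M 2 1) (f3 : MMap L M 3 2) : MMap L N 3 2 :=
  fc3 2 f3' f1 f1 f1 - fc2 2 f2' f2 f1 + fc2 2 f2' f1 f2 - pa (P12 3) (fc2 2 f2' f1 f2)
    + fc1 2 f1' f3

end Comp

end WL3
namespace WL3

/-! ## The 3-term complex associated to a CLWX 2-algebroid -/

/-- The graded object with `E0` in degree 0, `E1` in degree 1, `R` in degree 2. -/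
def cl (R E0 E1 : Type) : ℤ → Type
  | .ofNat 0 => E0
  | .ofNat 1 => E1
  | .ofNat 2 => R
  | .ofNat (_ + 3) => PUnit
  | .negSucc _ => PUnit

section clinst
variable (R E0 E1 : Type) [AddCommGroup R] [AddCommGroup E0] [AddCommGroup E1]

instance clACG : ∀ i : ℤ, AddCommGroup (cl R E0 E1 i)
  | .ofNat 0 => inferInstanceAs (AddCommGroup E0)
  | .ofNat 1 => inferInstanceAs (AddCommGroup E1)
  | .ofNat 2 => inferInstanceAs (AddCommGroup R)
  | .ofNat (_ + 3) => inferInstanceAs (AddCommGroup PUnit)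
  | .negSucc _ => inferInstanceAs (AddCommGroup PUnit)

variable (k : Type) [CommRing k] [Module k R] [Module k E0] [Module k E1]

instance clMod : ∀ i : ℤ, Module k (cl R E0 E1 i)
  | .ofNat 0 => inferInstanceAs (Module k E0)
  | .ofNat 1 => inferInstanceAs (Module k E1)
  | .ofNat 2 => inferInstanceAs (Module k R)
  | .ofNat (_ + 3) => inferInstanceAs (Module k PUnit)
  | .negSucc _ => inferInstanceAs (Module k PUnit)

end clinst

section clmaps
variable {R E0 E1 : Type}

def getE0 {i : ℤ} (h : i = 0) (v : cl R E0 E1 i) : E0 := by subst h; exact v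
def getE1 {i : ℤ} (h : i = 1) (v : cl R E0 E1 i) : E1 := by subst h; exact v
def getR {i : ℤ} (h : i = 2) (v : cl R E0 E1 i) : R := by subst h; exact v
def put0 {i : ℤ} (h : i = 0) (v : E0) : cl R E0 E1 i := by subst h; exact v
def put1 {i : ℤ} (h : i = 1) (v : E1) : cl R E0 E1 i := by subst h; exact v
def put2 {i : ℤ} (h : i = 2) (v : R) : cl R E0 E1 i := by subst h; exact v

variable [AddCommGroup R] [AddCommGroup E0] [AddCommGroup E1]
variable (k : Type) [CommRing k] [Module k R] [Module k E0] [Module k E1]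

/-- The differential of the complex `E0 ← E1 ← R` as an `MMap`, from `∂` and `D`. -/
def mkD (pd : E1 → E0) (Dm : R → E1) : MMap (cl R E0 E1) (cl R E0 E1) 1 (-1) :=
  fun d x =>
    if h1 : d 0 = 1 then
      put0 (by rw [Fin.sum_univ_one, h1]; norm_num) (pd (getE1 h1 (x 0)))
    else if h2 : d 0 = 2 then
      put1 (by rw [Fin.sum_univ_one, h2]; norm_num) (Dm (getR h2 (x 0)))
    else 0

/-- `λ2` built from `∘` (its components `c00, c01, c10`) and `λ2(x,f) = S(x,Df)`. -/
def mkl2 (c00 : E0 → E0 → E0) (c01 : E0 → E1 → E1) (c10 : E1 → E0 → E1)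
    (S : E0 → E1 → R) (Dm : R → E1) : MMap (cl R E0 E1) (cl R E0 E1) 2 0 :=
  fun d x =>
    if h : d 0 = 0 ∧ d 1 = 0 then
      put0 (by rw [Fin.sum_univ_two, h.1, h.2]; norm_num)
        (c00 (getE0 h.1 (x 0)) (getE0 h.2 (x 1)))
    else if h : d 0 = 0 ∧ d 1 = 1 then
      put1 (by rw [Fin.sum_univ_two, h.1, h.2]; norm_num)
        (c01 (getE0 h.1 (x 0)) (getE1 h.2 (x 1)))
    else if h : d 0 = 1 ∧ d 1 = 0 then
      put1 (by rw [Fin.sum_univ_two, h.1, h.2]; norm_num)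
        (c10 (getE1 h.1 (x 0)) (getE0 h.2 (x 1)))
    else if h : d 0 = 0 ∧ d 1 = 2 then
      put2 (by rw [Fin.sum_univ_two, h.1, h.2]; norm_num)
        (S (getE0 h.1 (x 0)) (Dm (getR h.2 (x 1))))
    else 0

/-- `λ21` built from the pairing `S` (symmetrically on `E0 ⊗ E1` and `E1 ⊗ E0`). -/
def mkl21 (S : E0 → E1 → R) : MMap (cl R E0 E1) (cl R E0 E1) 2 1 :=
  fun d x =>
    if h : d 0 = 0 ∧ d 1 = 1 then
      put2 (by rw [Fin.sum_univ_two, h.1, h.2]; norm_num)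
        (S (getE0 h.1 (x 0)) (getE1 h.2 (x 1)))
    else if h : d 0 = 1 ∧ d 1 = 0 then
      put2 (by rw [Fin.sum_univ_two, h.1, h.2]; norm_num)
        (S (getE0 h.2 (x 1)) (getE1 h.1 (x 0)))
    else 0

/-- `λ3` built from `Ω` on `E0 ⊗ E0 ⊗ E0`. -/
def mkl3 (Om : E0 → E0 → E0 → E1) : MMap (cl R E0 E1) (cl R E0 E1) 3 1 :=
  fun d x =>
    if h : d 0 = 0 ∧ d 1 = 0 ∧ d 2 = 0 then
      put1 (by rw [Fin.sum_univ_three, h.1, h.2.1, h.2.2]; norm_num)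
        (Om (getE0 h.1 (x 0)) (getE0 h.2.1 (x 1)) (getE0 h.2.2 (x 2)))
    else 0

end clmaps

end WL3

/-! The total module `E0 × E1 × R` turns graded multilinear maps into ungraded ones. Every
structure map other than `D` vanishes as soon as two of its arguments have positive degree, so no
Koszul sign produced by permuting arguments or inserting a structure map survives, and the Leibniz
3-algebra equations become identities between ordinary multilinear maps on the total module.

The skew bracket differs from `∘` only by `D`-exact terms, the skew-symmetrized `λ3` differs from
`Ω` only when exactly one argument lies in `E1`, by a trilinear form built from `S (x ∘ y, a)`, and
the skew-symmetrized `λ4` is the form `S (Ω (x, y, z), w)`, which is alternating by (C5). Equation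
(L2) for these maps follows from the invariance (C4) of `S` and (L2) for `∘` and `Ω`; (L3) needs in
addition (C3), (C5) and (L3) for `Ω`; (L4) comes from applying `S` to (L3) for `Ω`. -/

namespace WL3

/-! ## The total module -/

/-- The grading involution of the total module `E0 × E1 × R`, acting on the degree `i` part as
`(-1) ^ i`. -/
def parity {R E0 E1 : Type*} [Neg E1] (t : E0 × E1 × R) : E0 × E1 × R := (t.1, -t.2.1, t.2.2)

section Total

variable (k : Type) {R E0 E1 : Type} [CommRing k] [AddCommGroup R] [AddCommGroup E0]
  [AddCommGroup E1] [Module k R] [Module k E0] [Module k E1]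

/-- The inclusion of the degree `i` part of `cl R E0 E1` into the total module `E0 × E1 × R`. -/
def toTotal : ∀ i : ℤ, cl R E0 E1 i →ₗ[k] E0 × E1 × R
  | .ofNat 0 => LinearMap.inl k E0 (E1 × R)
  | .ofNat 1 => LinearMap.inr k E0 (E1 × R) ∘ₗ LinearMap.inl k E1 R
  | .ofNat 2 => LinearMap.inr k E0 (E1 × R) ∘ₗ LinearMap.inr k E1 R
  | .ofNat (_ + 3) => 0
  | .negSucc _ => 0

theorem toTotal_injective :
    ∀ i : ℤ, Function.Injective (toTotal k (R := R) (E0 := E0) (E1 := E1) i)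
  | .ofNat 0, _, _, h => congrArg Prod.fst h
  | .ofNat 1, _, _, h => congrArg (fun t => t.2.1) h
  | .ofNat 2, _, _, h => congrArg (fun t => t.2.2) h
  | .ofNat (_ + 3), _, _, _ => rfl
  | .negSucc _, _, _, _ => rfl

theorem toTotal_gcast {i j : ℤ} (h : i = j) (v : cl R E0 E1 i) :
    toTotal k j (gcast h v) = toTotal k i v := by
  subst h; rfl

theorem toTotal_fst_eq_zero :
    ∀ {i : ℤ}, i ≠ 0 → ∀ v : cl R E0 E1 i, (toTotal k i v).1 = 0
  | .ofNat 0, h, _ => absurd rfl h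
  | .ofNat 1, _, _ => rfl
  | .ofNat 2, _, _ => rfl
  | .ofNat (_ + 3), _, _ => rfl
  | .negSucc _, _, _ => rfl

theorem toTotal_snd_fst_eq_zero :
    ∀ {i : ℤ}, i ≠ 1 → ∀ v : cl R E0 E1 i, (toTotal k i v).2.1 = 0
  | .ofNat 0, _, _ => rfl
  | .ofNat 1, h, _ => absurd rfl h
  | .ofNat 2, _, _ => rfl
  | .ofNat (_ + 3), _, _ => rfl
  | .negSucc _, _, _ => rfl

theorem toTotal_snd_snd_eq_zero :
    ∀ {i : ℤ}, i ≠ 2 → ∀ v : cl R E0 E1 i, (toTotal k i v).2.2 = 0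
  | .ofNat 0, _, _ => rfl
  | .ofNat 1, _, _ => rfl
  | .ofNat 2, h, _ => absurd rfl h
  | .ofNat (_ + 3), _, _ => rfl
  | .negSucc _, _, _ => rfl

@[simp] theorem toTotal_put0 {i : ℤ} (h : i = 0) (v : E0) :
    toTotal k i (put0 (R := R) (E1 := E1) h v) = (v, 0, 0) := by subst h; rfl

@[simp] theorem toTotal_put1 {i : ℤ} (h : i = 1) (v : E1) :
    toTotal k i (put1 (R := R) (E0 := E0) h v) = (0, v, 0) := by subst h; rfl

@[simp] theorem toTotal_put2 {i : ℤ} (h : i = 2) (v : R) :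
    toTotal k i (put2 (E0 := E0) (E1 := E1) h v) = (0, 0, v) := by subst h; rfl

theorem getE0_eq {i : ℤ} (h : i = 0) (v : cl R E0 E1 i) :
    getE0 h v = (toTotal k i v).1 := by
  subst h; rfl

theorem getE1_eq {i : ℤ} (h : i = 1) (v : cl R E0 E1 i) :
    getE1 h v = (toTotal k i v).2.1 := by
  subst h; rfl

theorem getR_eq {i : ℤ} (h : i = 2) (v : cl R E0 E1 i) :
    getR h v = (toTotal k i v).2.2 := by
  subst h; rfl

/-- The elements of the total module which come from a single degree. -/
def IsHomogeneous (t : E0 × E1 × R) : Prop := ∃ i v, toTotal k i v = t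

@[simp] theorem isHomogeneous_E0 (x : E0) : IsHomogeneous k ((x, 0, 0) : E0 × E1 × R) :=
  ⟨0, x, rfl⟩

@[simp] theorem isHomogeneous_E1 (a : E1) : IsHomogeneous k ((0, a, 0) : E0 × E1 × R) :=
  ⟨1, a, rfl⟩

@[simp] theorem isHomogeneous_R (f : R) : IsHomogeneous k ((0, 0, f) : E0 × E1 × R) :=
  ⟨2, f, rfl⟩

theorem parity_toTotal {i : ℤ} (v : cl R E0 E1 i) :
    parity (toTotal k i v) = (-1 : k) ^ i.natAbs • toTotal k i v := by
  rcases Nat.even_or_odd i.natAbs with hi | hi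
  · have h1 := toTotal_snd_fst_eq_zero k (i := i) (by rintro rfl; simp at hi) v
    simp [hi.neg_one_pow, parity, Prod.ext_iff, h1]
  · have h0 := toTotal_fst_eq_zero k (i := i) (by rintro rfl; simp at hi) v
    have h2 := toTotal_snd_snd_eq_zero k (i := i) (by rintro rfl; exact absurd hi (by decide)) v
    simp [hi.neg_one_pow, parity, Prod.ext_iff, h0, h2]

end Total

/-! ## Maps insensitive to Koszul signs -/

section SignFree

/-- The tuple obtained from `t` by applying `G` to the block of `n` entries following the first
`m₁` ones. -/
def insertBlock {T : Type*} (m₁ m₂ : ℕ) {n : ℕ} (G : (Fin n → T) → T)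
    (t : Fin (m₁ + n + m₂) → T) : Fin (m₁ + 1 + m₂) → T :=
  Fin.append
    (Fin.append (fun j : Fin m₁ => t (Fin.castAdd m₂ (Fin.castAdd n j)))
      (fun _ : Fin 1 => G (fun j => t (Fin.castAdd m₂ (Fin.natAdd m₁ j)))))
    (fun j : Fin m₂ => t (Fin.natAdd (m₁ + n) j))

/-- The entry of `insertBlock m₁ m₂ G t` which depends on the `i`-th entry of `t`. -/
def blockSlot (m₁ m₂ n : ℕ) (i : Fin (m₁ + n + m₂)) : Fin (m₁ + 1 + m₂) :=
  Fin.addCases (fun i' => Fin.castAdd m₂ (Fin.addCases (fun a => Fin.castAdd 1 a)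
    (fun _ => Fin.natAdd m₁ 0) i')) (fun c => Fin.natAdd (m₁ + 1) c) i

theorem insertBlock_blockSlot {T : Type*} {p : T → Prop} {m₁ m₂ n : ℕ} {G : (Fin n → T) → T}
    (hG : ∀ u j, p (u j) → p (G u)) {t : Fin (m₁ + n + m₂) → T} {i : Fin (m₁ + n + m₂)}
    (h : p (t i)) : p (insertBlock m₁ m₂ G t (blockSlot m₁ m₂ n i)) := by
  induction i using Fin.addCases with
  | left i =>
    induction i using Fin.addCases with
    | left i => simpa [blockSlot, insertBlock] using h
    | right i => simpa [blockSlot, insertBlock] using hG _ i h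
  | right i => simpa [blockSlot, insertBlock] using h

theorem eq_or_mem_block_of_blockSlot_eq {m₁ m₂ n : ℕ} {i j : Fin (m₁ + n + m₂)}
    (h : blockSlot m₁ m₂ n i = blockSlot m₁ m₂ n j) :
    i = j ∨ ∃ a b : Fin n,
      i = Fin.castAdd m₂ (Fin.natAdd m₁ a) ∧ j = Fin.castAdd m₂ (Fin.natAdd m₁ b) := by
  induction i using Fin.addCases with
  | left i =>
    induction j using Fin.addCases with
    | left j =>
      induction i using Fin.addCases <;> induction j using Fin.addCases <;>
        simp [blockSlot, Fin.ext_iff] at h ⊢ <;> omega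
    | right j =>
      induction i using Fin.addCases <;> simp [blockSlot, Fin.ext_iff] at h ⊢ <;> omega
  | right i =>
    induction j using Fin.addCases with
    | left j =>
      induction j using Fin.addCases <;> simp [blockSlot, Fin.ext_iff] at h ⊢ <;> omega
    | right j => simp [blockSlot, Fin.ext_iff] at h ⊢; omega

theorem insertBlock_one {T : Type*} (m₁ m₂ : ℕ) (g : T → T) (t : Fin (m₁ + 1 + m₂) → T) :
    insertBlock m₁ m₂ (fun s : Fin 1 → T => g (s 0)) t
      = Function.update t (Fin.castAdd m₂ (Fin.natAdd m₁ 0))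
          (g (t (Fin.castAdd m₂ (Fin.natAdd m₁ 0)))) := by
  funext j
  induction j using Fin.addCases with
  | left j =>
    induction j using Fin.addCases with
    | left j =>
      rw [Function.update_of_ne (by simp [Fin.ext_iff, j.isLt.ne])]
      simp [insertBlock]
    | right j => simp [insertBlock, Subsingleton.elim j 0]
  | right j =>
    rw [Function.update_of_ne (by simp [Fin.ext_iff]; omega)]
    simp [insertBlock]

variable {E0 V : Type*} [AddCommGroup E0] [AddCommGroup V]

/-- A map on `E0 × V`, with `E0` in degree `0` and `V` in positive degrees, which does not see the
Koszul signs of permutations and insertions: it vanishes as soon as two inputs have positive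
degree. -/
structure SignFree {m : ℕ} (F : (Fin m → E0 × V) → E0 × V) : Prop where
  eq_zero : ∀ t i, t i = 0 → F t = 0
  fst_eq_zero : ∀ t i, (t i).1 = 0 → (F t).1 = 0
  eq_zero_of_two : ∀ t i j, i ≠ j → (t i).1 = 0 → (t j).1 = 0 → F t = 0

namespace SignFree

variable {m : ℕ} {F G : (Fin m → E0 × V) → E0 × V}

theorem zero : SignFree (0 : (Fin m → E0 × V) → E0 × V) :=
  ⟨fun _ _ _ => rfl, fun _ _ _ => rfl, fun _ _ _ _ _ _ => rfl⟩

theorem add (hF : SignFree F) (hG : SignFree G) : SignFree (F + G) where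
  eq_zero t i h := by simp [hF.eq_zero t i h, hG.eq_zero t i h]
  fst_eq_zero t i h := by simp [hF.fst_eq_zero t i h, hG.fst_eq_zero t i h]
  eq_zero_of_two t i j hij h h' := by
    simp [hF.eq_zero_of_two t i j hij h h', hG.eq_zero_of_two t i j hij h h']

theorem smul {S : Type*} [Monoid S] [DistribMulAction S E0] [DistribMulAction S V] (c : S)
    (hF : SignFree F) : SignFree (c • F) where
  eq_zero t i h := by simp [hF.eq_zero t i h]
  fst_eq_zero t i h := by simp [hF.fst_eq_zero t i h]
  eq_zero_of_two t i j hij h h' := by simp [hF.eq_zero_of_two t i j hij h h']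

theorem sub (hF : SignFree F) (hG : SignFree G) : SignFree (F - G) := by
  simpa [sub_eq_add_neg] using hF.add (hG.smul (-1 : ℤ))

theorem sum {ι : Type*} (s : Finset ι) {F : ι → (Fin m → E0 × V) → E0 × V}
    (hF : ∀ a, SignFree (F a)) : SignFree (∑ a ∈ s, F a) :=
  Finset.sum_induction F SignFree (fun _ _ => add) zero fun a _ => hF a

theorem perm (hF : SignFree F) (σ : Equiv.Perm (Fin m)) : SignFree (fun t => F (t ∘ σ)) where
  eq_zero t i h := hF.eq_zero _ (σ.symm i) (by simpa using h)
  fst_eq_zero t i h := hF.fst_eq_zero _ (σ.symm i) (by simpa using h)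
  eq_zero_of_two t i j hij h h' := hF.eq_zero_of_two _ (σ.symm i) (σ.symm j)
    (by simpa using hij) (by simpa using h) (by simpa using h')

theorem insertBlock {m₁ m₂ n : ℕ} {F : (Fin (m₁ + 1 + m₂) → E0 × V) → E0 × V}
    {G : (Fin n → E0 × V) → E0 × V} (hF : SignFree F) (hG : SignFree G) :
    SignFree (fun t => F (WL3.insertBlock m₁ m₂ G t)) where
  eq_zero t i h :=
    hF.eq_zero _ (blockSlot m₁ m₂ n i) (insertBlock_blockSlot (p := (· = 0)) hG.eq_zero h)
  fst_eq_zero t i h := hF.fst_eq_zero _ (blockSlot m₁ m₂ n i)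
    (insertBlock_blockSlot (p := fun v : E0 × V => v.1 = 0) hG.fst_eq_zero h)
  eq_zero_of_two t i j hij h h' := by
    by_cases hs : blockSlot m₁ m₂ n i = blockSlot m₁ m₂ n j
    · obtain rfl | ⟨a, b, rfl, rfl⟩ := eq_or_mem_block_of_blockSlot_eq hs
      · exact absurd rfl hij
      · refine hF.eq_zero _ (Fin.castAdd m₂ (Fin.natAdd m₁ 0)) ?_
        simpa [WL3.insertBlock] using
          hG.eq_zero_of_two _ a b (fun hab => hij (by rw [hab])) h h'
    · exact hF.eq_zero_of_two _ _ _ hs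
        (insertBlock_blockSlot (p := fun v : E0 × V => v.1 = 0) hG.fst_eq_zero h)
        (insertBlock_blockSlot (p := fun v : E0 × V => v.1 = 0) hG.fst_eq_zero h')

end SignFree

end SignFree

/-! ## Totalizations of graded maps -/

section Totalization

variable (k : Type) {R E0 E1 : Type} [CommRing k] [AddCommGroup R] [AddCommGroup E0]
  [AddCommGroup E1] [Module k R] [Module k E0] [Module k E1]

/-- `F` computes `μ` on tuples of homogeneous elements of the total module. -/
def Represents {m : ℕ} {r : ℤ} (μ : MMap (cl R E0 E1) (cl R E0 E1) m r)
    (F : (Fin m → E0 × E1 × R) → E0 × E1 × R) : Prop :=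
  ∀ d x, toTotal k _ (μ d x) = F (fun j => toTotal k _ (x j))

/-- `F` represents `μ` and is insensitive to Koszul signs, so that the sign conventions for
permutations and insertions of `μ` disappear on `F`. -/
structure IsTotalization {m : ℕ} {r : ℤ} (μ : MMap (cl R E0 E1) (cl R E0 E1) m r)
    (F : (Fin m → E0 × E1 × R) → E0 × E1 × R) : Prop where
  represents : Represents k μ F
  signFree : SignFree F

variable {k} {m : ℕ} {r : ℤ} {μ ν : MMap (cl R E0 E1) (cl R E0 E1) m r}
  {F G : (Fin m → E0 × E1 × R) → E0 × E1 × R}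

theorem Represents.eq (hμ : Represents k μ F) (hν : Represents k ν G) (h : ∀ t, F t = G t) :
    μ = ν := by
  funext d x
  apply toTotal_injective k
  rw [hμ, hν, h]

theorem Represents.apply_eq (hμ : Represents k μ F) (hν : Represents k ν G) (h : μ = ν)
    {t : Fin m → E0 × E1 × R} (ht : ∀ j, IsHomogeneous k (t j)) : F t = G t := by
  choose d x hx using ht
  obtain rfl : (fun j => toTotal k (d j) (x j)) = t := funext hx
  rw [← hμ, ← hν, h]

theorem Represents.isMultilinear {F : MultilinearMap k (fun _ : Fin m => E0 × E1 × R) (E0 × E1 × R)}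
    (hμ : Represents k μ F) : IsMultilinear k μ := by
  intro d x j
  have toTotal_update (v) : (fun i => toTotal k _ (Function.update x j v i))
      = Function.update (fun i => toTotal k _ (x i)) j (toTotal k _ v) :=
    funext fun i => Function.apply_update (fun i => toTotal k (d i)) x j v i
  refine ⟨fun a b => toTotal_injective k _ ?_, fun c a => toTotal_injective k _ ?_⟩
  · rw [map_add, hμ, hμ, hμ, toTotal_update, toTotal_update, toTotal_update, map_add,
      F.map_update_add]
  · rw [map_smul, hμ, hμ, toTotal_update, toTotal_update, map_smul, F.map_update_smul]

namespace IsTotalization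

theorem congr (hμ : IsTotalization k μ F) (h : ∀ t, F t = G t) : IsTotalization k μ G :=
  funext h ▸ hμ

theorem zero : IsTotalization k (0 : MMap (cl R E0 E1) (cl R E0 E1) m r) 0 :=
  ⟨fun _ _ => map_zero _, .zero⟩

theorem add (hμ : IsTotalization k μ F) (hν : IsTotalization k ν G) :
    IsTotalization k (μ + ν) (F + G) :=
  ⟨fun d x => by simp only [Pi.add_apply, map_add, hμ.represents d x, hν.represents d x],
    hμ.signFree.add hν.signFree⟩

theorem sub (hμ : IsTotalization k μ F) (hν : IsTotalization k ν G) :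
    IsTotalization k (μ - ν) (F - G) :=
  ⟨fun d x => by simp only [Pi.sub_apply, map_sub, hμ.represents d x, hν.represents d x],
    hμ.signFree.sub hν.signFree⟩

theorem smul (c : k) (hμ : IsTotalization k μ F) : IsTotalization k (c • μ) (c • F) :=
  ⟨fun d x => by simp only [Pi.smul_apply, map_smul, hμ.represents d x], hμ.signFree.smul c⟩

theorem zsmul (c : ℤ) (hμ : IsTotalization k μ F) : IsTotalization k (c • μ) (c • F) :=
  ⟨fun d x => by simp only [Pi.smul_apply, map_zsmul, hμ.represents d x], hμ.signFree.smul c⟩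

theorem sum {ι : Type*} (s : Finset ι) {μ : ι → MMap (cl R E0 E1) (cl R E0 E1) m r}
    {F : ι → (Fin m → E0 × E1 × R) → E0 × E1 × R} (hμ : ∀ a, IsTotalization k (μ a) (F a)) :
    IsTotalization k (∑ a ∈ s, μ a) (∑ a ∈ s, F a) :=
  ⟨fun d x => by simp only [Finset.sum_apply, map_sum, (hμ _).represents d x],
    .sum s fun a => (hμ a).signFree⟩

end IsTotalization

theorem koszulSign_eq_one {d : Fin m → ℤ} (σ : Equiv.Perm (Fin m))
    (h : ∀ i j, i ≠ j → d i * d j = 0) : koszulSign d σ = 1 := by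
  refine Finset.prod_eq_one fun p hp => ?_
  rw [h _ _ (Finset.mem_filter.1 hp).2.1.ne]
  rfl

theorem IsTotalization.pa (hμ : IsTotalization k μ F) (σ : Equiv.Perm (Fin m)) :
    IsTotalization k (pa σ μ) (fun t => F (t ∘ σ.symm)) := by
  refine ⟨fun d x => ?_, hμ.signFree.perm σ.symm⟩
  simp only [WL3.pa]
  rw [map_zsmul, toTotal_gcast, hμ.represents]
  by_cases h : ∀ i j, i ≠ j → d i * d j = 0
  · rw [koszulSign_eq_one σ h, one_smul]
    rfl
  · push Not at h
    obtain ⟨i, j, hij, h⟩ := h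
    have hF := (hμ.signFree.perm σ.symm).eq_zero_of_two (fun j => toTotal k _ (x j)) i j hij
      (toTotal_fst_eq_zero k (left_ne_zero_of_mul h) _)
      (toTotal_fst_eq_zero k (right_ne_zero_of_mul h) _)
    exact (congrArg _ hF).trans ((smul_zero _).trans hF.symm)

theorem toTotal_pcomp {m₁ m₂ n : ℕ} {s : ℤ} {μ : MMap (cl R E0 E1) (cl R E0 E1) (m₁ + 1 + m₂) r}
    {ν : MMap (cl R E0 E1) (cl R E0 E1) n s}
    {F : (Fin (m₁ + 1 + m₂) → E0 × E1 × R) → E0 × E1 × R}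
    {G : (Fin n → E0 × E1 × R) → E0 × E1 × R} (hμ : Represents k μ F) (hν : Represents k ν G)
    (d : Fin (m₁ + n + m₂) → ℤ) (x : ∀ j, cl R E0 E1 (d j)) :
    toTotal k _ (pcomp m₁ m₂ μ ν d x)
      = ((-1 : ℤ) ^ (s * ∑ j : Fin m₁, d (Fin.castAdd m₂ (Fin.castAdd n j))).natAbs) •
        F (insertBlock m₁ m₂ G (fun j => toTotal k _ (x j))) := by
  rw [pcomp, map_zsmul, toTotal_gcast, hμ]
  congr 2
  funext j
  induction j using Fin.addCases with
  | left j =>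
    induction j using Fin.addCases with
    | left j => simp [insertBlock, toTotal_gcast]
    | right j => simp [insertBlock, toTotal_gcast, hν _ _]
  | right j => simp [insertBlock, toTotal_gcast]

theorem IsTotalization.pc {m₁ m₂ n : ℕ} {Q s : ℤ} {h : r + s = Q}
    {μ : MMap (cl R E0 E1) (cl R E0 E1) (m₁ + 1 + m₂) r}
    {ν : MMap (cl R E0 E1) (cl R E0 E1) n s}
    {F : (Fin (m₁ + 1 + m₂) → E0 × E1 × R) → E0 × E1 × R}
    {G : (Fin n → E0 × E1 × R) → E0 × E1 × R} (hμ : IsTotalization k μ F)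
    (hν : IsTotalization k ν G) (hs : Even s ∨ ∀ t, (G t).1 = 0) :
    IsTotalization k (pc Q m₁ m₂ μ ν h) (fun t => F (insertBlock m₁ m₂ G t)) := by
  subst h
  refine ⟨fun d x => ?_, hμ.signFree.insertBlock hν.signFree⟩
  change toTotal k _ (pcomp m₁ m₂ μ ν d x) = _
  rw [toTotal_pcomp hμ.represents hν.represents]
  rcases hs with hs | hs
  · rw [Even.neg_one_pow (Int.natAbs_even.2 (hs.mul_right _)), one_smul]
  by_cases hd : ∀ j : Fin m₁, d (Fin.castAdd m₂ (Fin.castAdd n j)) = 0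
  · simp [hd]
  push Not at hd
  obtain ⟨j, hj⟩ := hd
  rw [hμ.signFree.eq_zero_of_two _ (Fin.castAdd m₂ (Fin.castAdd 1 j))
    (Fin.castAdd m₂ (Fin.natAdd m₁ 0)), smul_zero]
  · simp [Fin.ext_iff, j.isLt.ne]
  · simpa [insertBlock] using toTotal_fst_eq_zero k hj _
  · simpa [insertBlock] using hs _

/-- The tuple obtained from `t` by applying a differential to the `p`-th entry, and the grading
involution to the entries which the differential jumps over. -/
def diffAt (dT : E0 × E1 × R → E0 × E1 × R) (p : Fin m) (t : Fin m → E0 × E1 × R) :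
    Fin m → E0 × E1 × R :=
  fun j => if j < p then parity (t j) else if j = p then dT (t j) else t j

theorem toTotal_mcast {m' : ℕ} {r' : ℤ} (hm : m = m') (hr : r = r') (d : Fin m' → ℤ)
    (x : ∀ j, cl R E0 E1 (d j)) :
    toTotal k _ (mcast hm hr μ d x)
      = toTotal k _ (μ (fun j => d (Fin.cast hm j)) (fun j => x (Fin.cast hm j))) := by
  subst hm hr; rfl

variable {D : MMap (cl R E0 E1) (cl R E0 E1) 1 (-1)} {dT : E0 × E1 × R → E0 × E1 × R}

theorem neg_one_pow_natAbs_sum {ι : Type*} (s : Finset ι) (d : ι → ℤ) :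
    (-1 : k) ^ (∑ j ∈ s, d j).natAbs = ∏ j ∈ s, (-1) ^ (d j).natAbs := by
  classical
  induction s using Finset.induction_on with
  | empty => simp
  | insert i s hi ih =>
    rw [Finset.sum_insert hi, Finset.prod_insert hi, ← ih, ← pow_add]
    apply neg_one_pow_congr
    simp only [Int.natAbs_even, Int.even_add, Nat.even_add]

theorem toTotal_pcomp_diff (hD : Represents k D (fun t => dT (t 0))) {m₁ m₂ : ℕ}
    {μ : MMap (cl R E0 E1) (cl R E0 E1) (m₁ + 1 + m₂) r}
    {F : MultilinearMap k (fun _ : Fin (m₁ + 1 + m₂) => E0 × E1 × R) (E0 × E1 × R)}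
    (hμ : Represents k μ F) (d : Fin (m₁ + 1 + m₂) → ℤ) (x : ∀ j, cl R E0 E1 (d j)) :
    toTotal k _ (pcomp m₁ m₂ μ D d x)
      = F (diffAt dT (Fin.castAdd m₂ (Fin.natAdd m₁ 0)) (fun j => toTotal k _ (x j))) := by
  set p : Fin (m₁ + 1 + m₂) := Fin.castAdd m₂ (Fin.natAdd m₁ 0)
  set t : Fin (m₁ + 1 + m₂) → E0 × E1 × R := fun j => toTotal k _ (x j)
  have diffAt_eq_smul : diffAt dT p t = fun j =>
      (if j < p then (-1 : k) ^ (d j).natAbs else 1) • Function.update t p (dT (t p)) j := by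
    funext j
    rcases lt_trichotomy j p with hj | rfl | hj
    · simp [diffAt, hj, hj.ne, t, parity_toTotal k]
    · simp [diffAt]
    · simp [diffAt, hj.not_gt, hj.ne']
  have prod_sign : ∏ j, (if j < p then (-1 : k) ^ (d j).natAbs else 1)
      = (-1) ^ (∑ j : Fin m₁, d (Fin.castAdd m₂ (Fin.castAdd 1 j))).natAbs := by
    have not_lt (j : ℕ) : ¬ m₁ + 1 + j < m₁ := by omega
    simp [Fin.prod_univ_add, Fin.lt_def, p, neg_one_pow_natAbs_sum, not_lt]
  rw [toTotal_pcomp hμ hD, insertBlock_one, diffAt_eq_smul, F.map_smul_univ, prod_sign,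
    neg_one_mul, Int.natAbs_neg, ← Int.cast_smul_eq_zsmul k]
  norm_cast

theorem toTotal_mcast_pcomp_diff (hD : Represents k D (fun t => dT (t 0)))
    {F : MultilinearMap k (fun _ : Fin m => E0 × E1 × R) (E0 × E1 × R)} (hμ : Represents k μ F)
    {m₁ m₂ : ℕ} {r' : ℤ} (hm : m = m₁ + 1 + m₂) (hm' : m₁ + 1 + m₂ = m) (hr : r + -1 = r')
    {p : Fin m} (hp : p = Fin.cast hm' (Fin.castAdd m₂ (Fin.natAdd m₁ 0)))
    (d : Fin m → ℤ) (x : ∀ j, cl R E0 E1 (d j)) :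
    toTotal k _ (mcast hm' hr (pcomp m₁ m₂ (mcast hm rfl μ) D) d x)
      = F (diffAt dT p (fun j => toTotal k _ (x j))) := by
  subst hm hp
  rw [toTotal_mcast]
  exact toTotal_pcomp_diff hD hμ d x

theorem Represents.bd (hD : Represents k D (fun t => dT (t 0))) {Q : ℤ} {h : -1 + r = Q}
    {F : MultilinearMap k (fun _ : Fin m => E0 × E1 × R) (E0 × E1 × R)} (hμ : Represents k μ F) :
    Represents k (bd Q D D μ h) (fun t =>
      dT (F t) - (-1 : ℤ) ^ r.natAbs • ∑ p, F (diffAt dT p t)) := by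
  subst h
  intro d x
  change toTotal k _ (bdry D D μ d x) = _
  rw [bdry, Pi.sub_apply, Pi.sub_apply, Pi.smul_apply, Pi.smul_apply, Finset.sum_apply,
    Finset.sum_apply, map_sub, map_zsmul, map_sum, comp₁, toTotal_gcast, hD, hμ]
  congr 2
  refine Finset.sum_congr rfl fun p _ => toTotal_mcast_pcomp_diff hD hμ _ _ _ ?_ d x
  exact Fin.ext rfl

end Totalization

/-! ## The operations of a CLWX 2-algebroid -/

/-- The operations of a CLWX 2-algebroid: `pd` is `∂`, `S` the pairing, `c00`, `c01`, `c10` the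
components of `∘`, `Om` is `Ω` and `Dm` is `D`. The anchor is recovered as `ρ x f = S x (D f)`. -/
structure ClwxData (k R E0 E1 : Type*) [CommRing k] [AddCommGroup R] [AddCommGroup E0]
    [AddCommGroup E1] [Module k R] [Module k E0] [Module k E1] where
  pd : E1 →ₗ[k] E0
  S : E0 →ₗ[k] E1 →ₗ[k] R
  c00 : E0 →ₗ[k] E0 →ₗ[k] E0
  c01 : E0 →ₗ[k] E1 →ₗ[k] E1
  c10 : E1 →ₗ[k] E0 →ₗ[k] E1
  Om : E0 →ₗ[k] E0 →ₗ[k] E0 →ₗ[k] E1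
  Dm : R →ₗ[k] E1

namespace ClwxData

variable {k R E0 E1 : Type*} [CommRing k] [AddCommGroup R] [AddCommGroup E0]
  [AddCommGroup E1] [Module k R] [Module k E0] [Module k E1] (C : ClwxData k R E0 E1)

/-- The anchor, as a map into the endomorphisms of `R`. -/
def anchor : E0 →ₗ[k] R →ₗ[k] R := C.S.compl₂ C.Dm

theorem S_Dm (x : E0) (f : R) : C.S x (C.Dm f) = C.anchor x f := rfl

/-- The `4`-form `S (Ω (x, y, z), w)`. -/
def form : E0 →ₗ[k] E0 →ₗ[k] E0 →ₗ[k] E0 →ₗ[k] R :=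
  C.Om.compr₂ (LinearMap.llcomp k E0 E1 (E0 →ₗ[k] R) C.S.flip)

theorem S_Om (x y z w : E0) : C.S w (C.Om x y z) = C.form x y z w := rfl

/-- The axioms (C2)–(C7) of a CLWX 2-algebroid, together with the skew-symmetry of `∘` on `E0` and
of `Ω`. -/
structure PairingLaws : Prop where
  c00_swap : ∀ x y, C.c00 y x = -C.c00 x y
  Om_swap_left : ∀ x y z, C.Om y x z = -C.Om x y z
  Om_swap_right : ∀ x y z, C.Om x z y = -C.Om x y z
  c01_add_c10 : ∀ x a, C.c01 x a + C.c10 a x = C.Dm (C.S x a)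
  S_pd : ∀ a b, C.S (C.pd a) b = C.S (C.pd b) a
  anchor_S : ∀ x y a, C.anchor x (C.S y a) = C.S (C.c00 x y) a + C.S y (C.c01 x a)
  form_swap_right : ∀ x y z w, C.form x y w z = -C.form x y z w
  pd_Dm : ∀ f, C.pd (C.Dm f) = 0
  c01_Dm : ∀ x f, C.c01 x (C.Dm f) = C.Dm (C.anchor x f)

/-- The component identities of the Leibniz 3-algebra `E0 ← E1 ← R` of a CLWX 2-algebroid. -/
structure LeibnizLaws : Prop where
  pd_c01 : ∀ x a, C.pd (C.c01 x a) = C.c00 x (C.pd a)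
  c10_pd : ∀ a b, C.c10 a (C.pd b) = C.c01 (C.pd a) b
  pd_Om : ∀ x y z, C.pd (C.Om x y z)
    = C.c00 x (C.c00 y z) - C.c00 (C.c00 x y) z - C.c00 y (C.c00 x z)
  Om_pd : ∀ x y a, C.Om x y (C.pd a)
    = C.c01 x (C.c01 y a) - C.c01 (C.c00 x y) a - C.c01 y (C.c01 x a)
  anchor_c00 : ∀ x y f,
    C.anchor (C.c00 x y) f = C.anchor x (C.anchor y f) - C.anchor y (C.anchor x f)
  c01_Om : ∀ x y z w, C.c10 (C.Om x y z) w + C.c01 x (C.Om y z w) - C.c01 y (C.Om x z w)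
    + C.c01 z (C.Om x y w) - C.Om (C.c00 x y) z w + C.Om x (C.c00 y z) w
    - C.Om y (C.c00 x z) w - C.Om x y (C.c00 z w) + C.Om x z (C.c00 y w)
    - C.Om y z (C.c00 x w) = 0

/-- The identities satisfied by the operations of a CLWX 2-algebroid. -/
structure Laws : Prop extends C.PairingLaws, C.LeibnizLaws

variable {C}

namespace PairingLaws

variable (h : C.PairingLaws)
include h

theorem Om_rotate (x y z : E0) : C.Om y z x = C.Om x y z := by
  rw [h.Om_swap_right, h.Om_swap_left, neg_neg]

theorem form_swap_left (x y z w : E0) : C.form y x z w = -C.form x y z w := by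
  rw [← S_Om, h.Om_swap_left, map_neg, S_Om]

theorem form_swap_mid (x y z w : E0) : C.form x z y w = -C.form x y z w := by
  rw [← S_Om, h.Om_swap_right, map_neg, S_Om]

theorem form_last_to_first (x y z w : E0) : C.form y z w x = -C.form x y z w := by
  rw [h.form_swap_right, h.form_swap_mid, h.form_swap_left, neg_neg]

theorem form_last_to_second (x y z w : E0) : C.form x z w y = C.form x y z w := by
  rw [h.form_swap_right, h.form_swap_mid, neg_neg]

theorem form_second_to_first (x y z w : E0) : C.form y z x w = C.form x y z w := by
  rw [h.form_swap_mid, h.form_swap_left, neg_neg]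

theorem c10_eq (x : E0) (a : E1) : C.c10 a x = C.Dm (C.S x a) - C.c01 x a :=
  eq_sub_of_add_eq' (h.c01_add_c10 x a)

theorem S_c01 (x y : E0) (a : E1) :
    C.S y (C.c01 x a) = C.anchor x (C.S y a) - C.S (C.c00 x y) a :=
  eq_sub_of_add_eq' (h.anchor_S x y a).symm

theorem anchor_pd (a : E1) (f : R) : C.anchor (C.pd a) f = 0 := by
  rw [← S_Dm, h.S_pd, h.pd_Dm, map_zero, LinearMap.zero_apply]

end PairingLaws

namespace Laws

variable (h : C.Laws)
include h

theorem Dm_form (x y z w : E0) : C.Dm (C.form x y z w)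
    = C.c01 w (C.Om x y z) - C.c01 x (C.Om y z w) + C.c01 y (C.Om x z w) - C.c01 z (C.Om x y w)
      + C.Om (C.c00 x y) z w - C.Om x (C.c00 y z) w + C.Om y (C.c00 x z) w
      + C.Om x y (C.c00 z w) - C.Om x z (C.c00 y w) + C.Om y z (C.c00 x w) := by
  have c01_Om := h.c01_Om x y z w
  rw [h.c10_eq, S_Om] at c01_Om
  linear_combination (norm := module) c01_Om

theorem form_cocycle (x y z v w : E0) :
    C.anchor x (C.form y z v w) - C.anchor y (C.form x z v w) + C.anchor z (C.form x y v w)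
      - C.anchor v (C.form x y z w) + C.anchor w (C.form x y z v)
      - C.form (C.c00 x y) z v w + C.form (C.c00 x z) y v w - C.form (C.c00 x v) y z w
      + C.form (C.c00 x w) y z v - C.form (C.c00 y z) x v w + C.form (C.c00 y v) x z w
      - C.form (C.c00 y w) x z v - C.form (C.c00 z v) x y w + C.form (C.c00 z w) x y v
      - C.form (C.c00 v w) x y z = 0 := by
  have S_Dm_form := congrArg (C.S w) (h.Dm_form x y z v)
  simp only [map_add, map_sub, S_Dm, S_Om, h.S_c01, h.form_last_to_first (C.c00 _ _),
    h.form_swap_left (C.c00 _ _), h.form_second_to_first (C.c00 _ _)] at S_Dm_form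
  linear_combination (norm := module) S_Dm_form

end Laws

/-! ## The skew-symmetrized operations -/

variable [Invertible (2 : k)] (C)

/-- The `E0 × E1` component of the skew-symmetrization of `λ2`. -/
def act : E0 →ₗ[k] E1 →ₗ[k] E1 := C.c01 - ⅟(2 : k) • C.S.compr₂ C.Dm

theorem act_apply (x : E0) (a : E1) : C.act x a = C.c01 x a - ⅟(2 : k) • C.Dm (C.S x a) := rfl

/-- The composition `(x, y, a) ↦ ρ x (S (y, a))`. -/
def anchorS : E0 →ₗ[k] E0 →ₗ[k] E1 →ₗ[k] R := (LinearMap.llcomp k E1 R R).compl₁₂ C.anchor C.S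

/-- The `E0 × E0 × E1` component of the skew-symmetrization of `λ3`. -/
def tau : E0 →ₗ[k] E0 →ₗ[k] E1 →ₗ[k] R :=
  (⅟(2 : k) * ⅟(2 : k)) • (C.anchorS - C.anchorS.flip) - ⅟(2 : k) • C.c00.compr₂ C.S

theorem tau_apply (x y : E0) (a : E1) : C.tau x y a
    = (⅟(2 : k) * ⅟(2 : k)) • (C.anchor x (C.S y a) - C.anchor y (C.S x a))
      - ⅟(2 : k) • C.S (C.c00 x y) a := rfl

variable {C}

theorem PairingLaws.tau_swap (h : C.PairingLaws) (x y : E0) (a : E1) :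
    C.tau y x a = -C.tau x y a := by
  rw [tau_apply, tau_apply, h.c00_swap, map_neg, LinearMap.neg_apply]
  module

theorem PairingLaws.act_Dm (h : C.PairingLaws) (x : E0) (f : R) :
    C.act x (C.Dm f) = ⅟(2 : k) • C.Dm (C.anchor x f) := by
  rw [act_apply, h.c01_Dm, S_Dm]
  have := mul_invOf_self (2 : k)
  match_scalars
  grind

theorem PairingLaws.tau_Om (h : C.PairingLaws) (u v x y z : E0) : C.tau u v (C.Om x y z)
    = (⅟(2 : k) * ⅟(2 : k)) • (C.anchor u (C.form x y z v) - C.anchor v (C.form x y z u))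
      + ⅟(2 : k) • C.form (C.c00 u v) x y z := by
  rw [tau_apply, S_Om, S_Om, S_Om, h.form_last_to_first (C.c00 u v)]
  module

namespace Laws

variable (h : C.Laws)
include h

theorem pd_act (x : E0) (a : E1) : C.pd (C.act x a) = C.c00 x (C.pd a) := by
  rw [act_apply, map_sub, map_smul, h.pd_c01, h.pd_Dm, smul_zero, sub_zero]

theorem act_pd (a b : E1) : C.act (C.pd a) b = -C.act (C.pd b) a := by
  rw [act_apply, act_apply, ← h.c10_pd, h.c10_eq, h.S_pd]
  have := mul_invOf_self (2 : k)
  match_scalars <;> grind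

theorem tau_Dm (x y : E0) (f : R) :
    C.tau x y (C.Dm f) = -((⅟(2 : k) * ⅟(2 : k)) • C.anchor (C.c00 x y) f) := by
  rw [tau_apply, S_Dm, S_Dm, S_Dm, ← h.anchor_c00]
  have := mul_invOf_self (2 : k)
  match_scalars
  grind

theorem tau_pd (x : E0) (a b : E1) : C.tau x (C.pd a) b = -C.tau x (C.pd b) a := by
  have S_c00_pd := h.S_c01 x (C.pd a) b
  rw [h.S_pd, h.pd_c01] at S_c00_pd
  rw [tau_apply, tau_apply, h.anchor_pd, h.anchor_pd, h.S_pd b a]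
  have := mul_invOf_self (2 : k)
  linear_combination (norm := skip) (-⅟(2 : k)) • S_c00_pd
  match_scalars <;> grind

theorem jacobi_act (x y : E0) (a : E1) : C.Dm (C.tau x y a) + C.Om x y (C.pd a)
    = C.act x (C.act y a) - C.act (C.c00 x y) a - C.act y (C.act x a) := by
  simp only [tau_apply, act_apply, map_sub, map_smul, h.c01_Dm, h.Om_pd, h.S_c01, S_Dm,
    h.c00_swap x y, map_neg, LinearMap.neg_apply]
  have := mul_invOf_self (2 : k)
  match_scalars <;> grind

theorem form_pd (x y z : E0) (a : E1) : -C.form x y z (C.pd a)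
    = ⅟(2 : k) • (C.anchor x (C.tau y z a) - C.anchor y (C.tau x z a) + C.anchor z (C.tau x y a))
      - C.tau (C.c00 x y) z a - C.tau (C.c00 y z) x a + C.tau (C.c00 x z) y a
      - C.tau x y (C.act z a) + C.tau x z (C.act y a) - C.tau y z (C.act x a) := by
  rw [← S_Om, h.S_pd, h.pd_Om]
  simp only [tau_apply, act_apply, map_sub, map_smul, h.S_c01, h.anchor_c00, LinearMap.sub_apply,
    S_Dm, h.c00_swap x z, h.c00_swap x y, h.c00_swap y z, map_neg, LinearMap.neg_apply,
    h.c00_swap (C.c00 _ _) x, h.c00_swap (C.c00 _ _) y, h.c00_swap (C.c00 _ _) z]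
  have := mul_invOf_self (2 : k)
  match_scalars <;> grind

end Laws

/-! ## The operations on the total module -/

section Operations

variable {k R E0 E1 : Type*} [CommRing k] [AddCommGroup R] [AddCommGroup E0]
  [AddCommGroup E1] [Module k R] [Module k E0] [Module k E1] (C : ClwxData k R E0 E1)

/-- The differential on the total module. -/
def diff (u : E0 × E1 × R) : E0 × E1 × R := (C.pd u.2.1, C.Dm u.2.2, 0)

/-- The product `λ2` on the total module. -/
def prod (u v : E0 × E1 × R) : E0 × E1 × R :=
  (C.c00 u.1 v.1, C.c01 u.1 v.2.1 + C.c10 u.2.1 v.1, C.anchor u.1 v.2.2)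

/-- The pairing `λ21` on the total module. -/
def pairing (u v : E0 × E1 × R) : E0 × E1 × R := (0, 0, C.S u.1 v.2.1 + C.S v.1 u.2.1)

theorem pairing_comm (u v : E0 × E1 × R) : C.pairing u v = C.pairing v u := by
  simp only [pairing, add_comm]

/-- The map `λ3` on the total module. -/
def omega (u v w : E0 × E1 × R) : E0 × E1 × R := (0, C.Om u.1 v.1 w.1, 0)

/-- The product `λ2` on the total module, as a multilinear map. -/
def prodMultilinear : MultilinearMap k (fun _ : Fin 2 => E0 × E1 × R) (E0 × E1 × R) :=
  .mk' (fun t => C.prod (t 0) (t 1))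
    (fun t i u v => by fin_cases i <;> simp [prod, add_add_add_comm])
    (fun t i c u => by fin_cases i <;> simp [prod])

/-- The map `λ3` on the total module, as a multilinear map. -/
def omegaMultilinear : MultilinearMap k (fun _ : Fin 3 => E0 × E1 × R) (E0 × E1 × R) :=
  .mk' (fun t => C.omega (t 0) (t 1) (t 2))
    (fun t i u v => by fin_cases i <;> simp [omega])
    (fun t i c u => by fin_cases i <;> simp [omega])

end Operations

section SkewSymmetrized

variable {k R E0 E1 : Type*} [CommRing k] [AddCommGroup R] [AddCommGroup E0]
  [AddCommGroup E1] [Module k R] [Module k E0] [Module k E1] (C : ClwxData k R E0 E1)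

/-- The skew-symmetrization of `λ4` on the total module. -/
def quadruple (u v w z : E0 × E1 × R) : E0 × E1 × R := (0, 0, C.form u.1 v.1 w.1 z.1)

theorem pairing_omega_left (u v w z : E0 × E1 × R) :
    C.pairing (C.omega u v w) z = C.quadruple u v w z := by
  simp [pairing, omega, quadruple, S_Om]

/-- The skew-symmetrization of `λ4` on the total module, as a multilinear map. -/
def quadrupleMultilinear : MultilinearMap k (fun _ : Fin 4 => E0 × E1 × R) (E0 × E1 × R) :=
  .mk' (fun t => C.quadruple (t 0) (t 1) (t 2) (t 3))
    (fun t i u v => by fin_cases i <;> simp [quadruple])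
    (fun t i c u => by fin_cases i <;> simp [quadruple])

variable [Invertible (2 : k)]

/-- The skew-symmetrization of `λ2` on the total module. -/
def bracket (u v : E0 × E1 × R) : E0 × E1 × R :=
  (C.c00 u.1 v.1, C.act u.1 v.2.1 - C.act v.1 u.2.1,
    ⅟(2 : k) • C.anchor u.1 v.2.2 - ⅟(2 : k) • C.anchor v.1 u.2.2)

/-- The skew-symmetrization of `λ3` on the total module. -/
def triple (u v w : E0 × E1 × R) : E0 × E1 × R :=
  (0, C.Om u.1 v.1 w.1, C.tau u.1 v.1 w.2.1 + C.tau v.1 w.1 u.2.1 + C.tau w.1 u.1 v.2.1)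

/-- The skew-symmetrization of `λ2` on the total module, as a multilinear map. -/
def bracketMultilinear : MultilinearMap k (fun _ : Fin 2 => E0 × E1 × R) (E0 × E1 × R) :=
  .mk' (fun t => C.bracket (t 0) (t 1))
    (fun t i u v => by fin_cases i <;> simp [bracket, add_sub_add_comm])
    (fun t i c u => by fin_cases i <;> simp [bracket, smul_sub, smul_comm c (⅟(2 : k))])

/-- The skew-symmetrization of `λ3` on the total module, as a multilinear map. -/
def tripleMultilinear : MultilinearMap k (fun _ : Fin 3 => E0 × E1 × R) (E0 × E1 × R) :=
  .mk' (fun t => C.triple (t 0) (t 1) (t 2))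
    (fun t i u v => by fin_cases i <;> simp [triple] <;> abel)
    (fun t i c u => by fin_cases i <;> simp [triple])

end SkewSymmetrized

/-! ## The identities between the skew-symmetrized operations -/

namespace Laws

variable {k R E0 E1 : Type*} [CommRing k] [AddCommGroup R] [AddCommGroup E0]
  [AddCommGroup E1] [Module k R] [Module k E0] [Module k E1] {C : ClwxData k R E0 E1}
  [Invertible (2 : k)] (h : C.Laws)
include h

theorem diff_bracket (u v : E0 × E1 × R) :
    C.diff (C.bracket u v) = C.bracket (C.diff u) v + C.bracket (parity u) (C.diff v) := by
  ext
  · simp [diff, bracket, parity, h.pd_act, h.c00_swap v.1, sub_eq_add_neg, add_comm]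
  · simp [diff, bracket, parity, h.act_Dm, h.act_pd u.2.1]
    abel
  · simp [diff, bracket, parity, h.anchor_pd]

theorem diff_triple (u v w : E0 × E1 × R) :
    C.diff (C.triple u v w) + (C.triple (C.diff u) v w + C.triple (parity u) (C.diff v) w
      + C.triple (parity u) (parity v) (C.diff w))
      = C.bracket u (C.bracket v w) - C.bracket (C.bracket u v) w
        - C.bracket v (C.bracket u w) := by
  ext
  · simp [diff, triple, bracket, h.pd_Om]
  · have jacobi_uvw := h.jacobi_act u.1 v.1 w.2.1
    have jacobi_vwu := h.jacobi_act v.1 w.1 u.2.1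
    have jacobi_wuv := h.jacobi_act w.1 u.1 v.2.1
    rw [h.Om_rotate] at jacobi_vwu
    rw [← h.Om_rotate, h.c00_swap u.1, map_neg, LinearMap.neg_apply] at jacobi_wuv
    simp only [diff, triple, bracket, parity, map_add, map_sub, Prod.fst_add, Prod.snd_add,
      Prod.fst_sub, Prod.snd_sub]
    linear_combination (norm := module) jacobi_uvw + jacobi_vwu + jacobi_wuv
  · simp only [diff, triple, bracket, parity, map_neg, map_sub, map_smul, h.tau_Dm, h.anchor_c00,
      h.tau_swap v.1 (C.pd _), h.tau_swap w.1 (C.pd _), h.tau_swap u.1 (C.pd _),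
      Prod.snd_add, Prod.snd_sub]
    have tau_v := h.tau_pd v.1 u.2.1 w.2.1
    have tau_w := h.tau_pd w.1 u.2.1 v.2.1
    have tau_u := h.tau_pd u.1 v.2.1 w.2.1
    have := mul_invOf_self (2 : k)
    rw [tau_v, tau_w, tau_u]
    match_scalars <;> grind

theorem diff_quadruple (u v w z : E0 × E1 × R) :
    C.diff (C.quadruple u v w z) - (C.quadruple (C.diff u) v w z
      + C.quadruple (parity u) (C.diff v) w z + C.quadruple (parity u) (parity v) (C.diff w) z
      + C.quadruple (parity u) (parity v) (parity w) (C.diff z))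
      = C.bracket (C.triple u v w) z + C.bracket u (C.triple v w z)
        - C.bracket v (C.triple u w z) + C.bracket w (C.triple u v z)
        - C.triple (C.bracket u v) w z + C.triple u (C.bracket v w) z
        - C.triple v (C.bracket u w) z - C.triple u v (C.bracket w z)
        + C.triple u w (C.bracket v z) - C.triple v w (C.bracket u z) := by
  ext
  · simp [diff, quadruple, bracket, triple]
  · have Dm_form := h.Dm_form u.1 v.1 w.1 z.1
    have := mul_invOf_self (2 : k)
    simp only [diff, quadruple, parity, map_zero, Prod.mk_add_mk, add_zero, Prod.mk_sub_mk,
      sub_self, sub_zero, zero_sub, bracket, triple, LinearMap.zero_apply, act_apply, S_Om,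
      smul_zero, map_sub, map_smul, h.form_last_to_first u.1 v.1 w.1 z.1,
      h.form_last_to_second u.1 v.1 w.1 z.1,
      h.form_swap_right u.1 v.1 w.1 z.1, map_neg]
    linear_combination (norm := skip) -Dm_form
    match_scalars <;> grind
  · have form_pd_u := h.form_pd v.1 w.1 z.1 u.2.1
    have form_pd_v := h.form_pd u.1 w.1 z.1 v.2.1
    have form_pd_w := h.form_pd u.1 v.1 z.1 w.2.1
    have form_pd_z := h.form_pd u.1 v.1 w.1 z.2.1
    rw [h.form_last_to_first] at form_pd_u
    rw [h.form_last_to_second] at form_pd_v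
    rw [h.form_swap_right] at form_pd_w
    simp only [diff, quadruple, parity, map_zero, Prod.mk_add_mk, add_zero, Prod.mk_sub_mk,
      sub_self, zero_sub, bracket, triple, LinearMap.zero_apply, smul_zero, map_add, map_sub,
      map_neg, h.tau_swap (C.c00 _ _), h.tau_swap u.1 w.1, h.tau_swap u.1 z.1, h.tau_swap v.1 z.1]
    linear_combination (norm := module) -form_pd_u + form_pd_v - form_pd_w + form_pd_z

theorem quadruple_cocycle (t₀ t₁ t₂ t₃ t₄ : E0 × E1 × R) :
    0 = C.bracket (C.quadruple t₀ t₁ t₂ t₃) t₄ - C.bracket t₀ (C.quadruple t₁ t₂ t₃ t₄)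
        + C.bracket t₁ (C.quadruple t₀ t₂ t₃ t₄) - C.bracket t₂ (C.quadruple t₀ t₁ t₃ t₄)
        + C.bracket t₃ (C.quadruple t₀ t₁ t₂ t₄)
        + C.triple (C.triple t₀ t₁ t₂) t₃ t₄ + C.triple t₀ (C.triple t₁ t₂ t₃) t₄
        - C.triple t₁ (C.triple t₀ t₂ t₃) t₄ + C.triple t₂ (C.triple t₀ t₁ t₃) t₄
        + C.triple t₀ t₁ (C.triple t₂ t₃ t₄) - C.triple t₀ t₂ (C.triple t₁ t₃ t₄)
        + C.triple t₁ t₂ (C.triple t₀ t₃ t₄) + C.triple t₀ t₃ (C.triple t₁ t₂ t₄)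
        - C.triple t₁ t₃ (C.triple t₀ t₂ t₄) + C.triple t₂ t₃ (C.triple t₀ t₁ t₄)
        + C.quadruple (C.bracket t₀ t₁) t₂ t₃ t₄ - C.quadruple t₀ (C.bracket t₁ t₂) t₃ t₄
        + C.quadruple t₁ (C.bracket t₀ t₂) t₃ t₄ + C.quadruple t₀ t₁ (C.bracket t₂ t₃) t₄
        - C.quadruple t₀ t₂ (C.bracket t₁ t₃) t₄ + C.quadruple t₁ t₂ (C.bracket t₀ t₃) t₄
        - C.quadruple t₀ t₁ t₂ (C.bracket t₃ t₄) + C.quadruple t₀ t₁ t₃ (C.bracket t₂ t₄)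
        - C.quadruple t₀ t₂ t₃ (C.bracket t₁ t₄) + C.quadruple t₁ t₂ t₃ (C.bracket t₀ t₄) := by
  ext
  · simp [quadruple, bracket, triple]
  · simp [quadruple, bracket, triple]
  · have cocycle := h.form_cocycle t₀.1 t₁.1 t₂.1 t₃.1 t₄.1
    have := mul_invOf_self (2 : k)
    simp only [Prod.snd_zero, bracket, quadruple, map_zero, LinearMap.zero_apply, sub_self,
      smul_zero, zero_sub, sub_zero, Prod.mk_sub_mk, Prod.mk_add_mk, add_zero, zero_add, triple,
      h.tau_Om, map_neg, h.c00_swap _ t₄.1, LinearMap.neg_apply, h.form_last_to_first (C.c00 _ _),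
      h.form_swap_left (C.c00 _ _), h.form_second_to_first (C.c00 _ _),
      h.form_last_to_first t₀.1, h.form_last_to_first t₁.1 t₂.1 t₃.1 t₄.1,
      h.form_last_to_second t₀.1 t₁.1, h.form_last_to_second _ t₂.1 t₃.1 t₄.1,
      h.form_swap_right t₀.1 t₁.1 t₂.1, h.form_swap_right _ _ t₃.1 t₄.1]
    linear_combination (norm := skip) (3 * ⅟(2 : k)) • cocycle
    match_scalars <;> grind

end Laws
end ClwxData

/-! ## Totalizations of the structure maps -/

section StructureMaps

variable {k R E0 E1 : Type} [CommRing k] [AddCommGroup R] [AddCommGroup E0]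
  [AddCommGroup E1] [Module k R] [Module k E0] [Module k E1] (C : ClwxData k R E0 E1)

theorem represents_mkD :
    Represents k (mkD (fun a => C.pd a) (fun f => C.Dm f)) (fun t => C.diff (t 0)) := by
  intro d x
  rw [mkD]
  split_ifs with h1 h2
  · simp [getE1_eq k, ClwxData.diff, toTotal_snd_snd_eq_zero k (show d 0 ≠ 2 by omega)]
  · simp [getR_eq k, ClwxData.diff, toTotal_snd_fst_eq_zero k h1]
  · simp [ClwxData.diff, toTotal_snd_fst_eq_zero k h1, toTotal_snd_snd_eq_zero k h2, Prod.ext_iff]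

theorem signFree_prod : SignFree fun t : Fin 2 → E0 × E1 × R => C.prod (t 0) (t 1) where
  eq_zero t i h := by
    fin_cases i <;> simp only [Fin.zero_eta, Fin.mk_one] at h <;> simp [ClwxData.prod, h]
  fst_eq_zero t i h := by
    fin_cases i <;> simp only [Fin.zero_eta, Fin.mk_one] at h <;> simp [ClwxData.prod, h]
  eq_zero_of_two t i j hij h h' := by
    have fst_eq_zero : (t 0).1 = 0 ∧ (t 1).1 = 0 := by
      fin_cases i <;> fin_cases j <;> first | exact absurd rfl hij | exact ⟨h, h'⟩ | exact ⟨h', h⟩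
    simp [ClwxData.prod, fst_eq_zero]

theorem isTotalization_mkl2 :
    IsTotalization k (mkl2 (fun x y => C.c00 x y) (fun x a => C.c01 x a) (fun a x => C.c10 a x)
      (fun x a => C.S x a) (fun f => C.Dm f)) (fun t => C.prod (t 0) (t 1)) := by
  refine ⟨fun d x => ?_, signFree_prod C⟩
  rw [mkl2]
  split_ifs with h00 h01 h10 h02
  · simp [getE0_eq k, ClwxData.prod, toTotal_snd_fst_eq_zero k (show d 0 ≠ 1 by omega),
      toTotal_snd_fst_eq_zero k (show d 1 ≠ 1 by omega),
      toTotal_snd_snd_eq_zero k (show d 1 ≠ 2 by omega)]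
  · simp [getE0_eq k, getE1_eq k, ClwxData.prod, toTotal_fst_eq_zero k (show d 1 ≠ 0 by omega),
      toTotal_snd_snd_eq_zero k (show d 1 ≠ 2 by omega)]
  · simp [getE0_eq k, getE1_eq k, ClwxData.prod, toTotal_fst_eq_zero k (show d 0 ≠ 0 by omega)]
  · simp [getE0_eq k, getR_eq k, ClwxData.prod, toTotal_fst_eq_zero k (show d 1 ≠ 0 by omega),
      toTotal_snd_fst_eq_zero k (show d 1 ≠ 1 by omega), C.S_Dm]
  · rw [map_zero]
    by_cases h0 : d 0 = 0
    · simp [ClwxData.prod, Prod.ext_iff, toTotal_fst_eq_zero k (show d 1 ≠ 0 by omega),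
        toTotal_snd_fst_eq_zero k (show d 1 ≠ 1 by omega),
        toTotal_snd_snd_eq_zero k (show d 1 ≠ 2 by omega)]
    by_cases h1 : d 1 = 0
    · simp [ClwxData.prod, Prod.ext_iff, toTotal_fst_eq_zero k h0,
        toTotal_snd_fst_eq_zero k (show d 0 ≠ 1 by omega)]
    · simp [ClwxData.prod, Prod.ext_iff, toTotal_fst_eq_zero k h0, toTotal_fst_eq_zero k h1]

theorem signFree_pairing : SignFree fun t : Fin 2 → E0 × E1 × R => C.pairing (t 0) (t 1) where
  eq_zero t i h := by
    fin_cases i <;> simp only [Fin.zero_eta, Fin.mk_one] at h <;> simp [ClwxData.pairing, h]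
  fst_eq_zero _ _ _ := rfl
  eq_zero_of_two t i j hij h h' := by
    have fst_eq_zero : (t 0).1 = 0 ∧ (t 1).1 = 0 := by
      fin_cases i <;> fin_cases j <;> first | exact absurd rfl hij | exact ⟨h, h'⟩ | exact ⟨h', h⟩
    simp [ClwxData.pairing, fst_eq_zero]

theorem isTotalization_mkl21 :
    IsTotalization k (mkl21 (fun x a => C.S x a)) (fun t => C.pairing (t 0) (t 1)) := by
  refine ⟨fun d x => ?_, signFree_pairing C⟩
  rw [mkl21]
  split_ifs with h01 h10
  · simp [getE0_eq k, getE1_eq k, ClwxData.pairing, toTotal_fst_eq_zero k (show d 1 ≠ 0 by omega)]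
  · simp [getE0_eq k, getE1_eq k, ClwxData.pairing, toTotal_fst_eq_zero k (show d 0 ≠ 0 by omega)]
  · rw [map_zero]
    by_cases h0 : d 0 = 0
    · simp [ClwxData.pairing, Prod.ext_iff, toTotal_snd_fst_eq_zero k (show d 0 ≠ 1 by omega),
        toTotal_snd_fst_eq_zero k (show d 1 ≠ 1 by omega)]
    by_cases h1 : d 1 = 0
    · simp [ClwxData.pairing, Prod.ext_iff, toTotal_fst_eq_zero k h0,
        toTotal_snd_fst_eq_zero k (show d 0 ≠ 1 by omega)]
    · simp [ClwxData.pairing, Prod.ext_iff, toTotal_fst_eq_zero k h0, toTotal_fst_eq_zero k h1]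

theorem omega_eq_zero {t : Fin 3 → E0 × E1 × R} (i : Fin 3) (h : (t i).1 = 0) :
    C.omega (t 0) (t 1) (t 2) = 0 := by
  fin_cases i <;> simp only [Fin.zero_eta, Fin.mk_one, Fin.reduceFinMk] at h <;>
    simp [ClwxData.omega, h]

theorem signFree_omega :
    SignFree fun t : Fin 3 → E0 × E1 × R => C.omega (t 0) (t 1) (t 2) where
  eq_zero _ i h := omega_eq_zero C i (congrArg Prod.fst h)
  fst_eq_zero _ _ _ := rfl
  eq_zero_of_two _ i _ _ h _ := omega_eq_zero C i h

theorem isTotalization_mkl3 :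
    IsTotalization k (mkl3 (fun x y z => C.Om x y z))
      (fun t => C.omega (t 0) (t 1) (t 2)) := by
  refine ⟨fun d x => ?_, signFree_omega C⟩
  rw [mkl3]
  split_ifs with h
  · simp [getE0_eq k, ClwxData.omega]
  · obtain ⟨i, hi⟩ : ∃ i, d i ≠ 0 := by
      by_contra! h'
      exact h ⟨h' 0, h' 1, h' 2⟩
    exact (map_zero _).trans (omega_eq_zero C (t := fun j => toTotal k _ (x j)) i
      (toTotal_fst_eq_zero k hi _)).symm

end StructureMaps

/-! ## The Leibniz 3-algebra identities on the total module -/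

section Jacobi

variable {k R E0 E1 : Type} [CommRing k] [AddCommGroup R] [AddCommGroup E0]
  [AddCommGroup E1] [Module k R] [Module k E0] [Module k E1]
  {l2 : MMap (cl R E0 E1) (cl R E0 E1) 2 0} {l3 : MMap (cl R E0 E1) (cl R E0 E1) 3 1}
  {l4 : MMap (cl R E0 E1) (cl R E0 E1) 4 2}
  {B : E0 × E1 × R → E0 × E1 × R → E0 × E1 × R}
  {T : E0 × E1 × R → E0 × E1 × R → E0 × E1 × R → E0 × E1 × R}
  {U : E0 × E1 × R → E0 × E1 × R → E0 × E1 × R → E0 × E1 × R → E0 × E1 × R}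

theorem represents_jacobi_two (h2 : IsTotalization k l2 (fun t => B (t 0) (t 1))) :
    Represents k (pc 0 1 0 l2 l2 - pc 0 0 1 l2 l2 - pa (P12 3) (pc 0 1 0 l2 l2))
      (fun t : Fin 3 → E0 × E1 × R => B (t 0) (B (t 1) (t 2)) - B (B (t 0) (t 1)) (t 2)
        - B (t 1) (B (t 0) (t 2))) := by
  have BB₀ : IsTotalization k (m := 3) (pc 0 0 1 l2 l2) (fun t => B (B (t 0) (t 1)) (t 2)) :=
    h2.pc (m₁ := 0) (m₂ := 1) h2 (.inl ⟨0, rfl⟩)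
  have BB₁ : IsTotalization k (m := 3) (pc 0 1 0 l2 l2) (fun t => B (t 0) (B (t 1) (t 2))) :=
    h2.pc (m₁ := 1) (m₂ := 0) h2 (.inl ⟨0, rfl⟩)
  exact ((BB₁.sub BB₀).sub (BB₁.pa _)).represents

theorem represents_jacobi_three (h2 : IsTotalization k l2 (fun t => B (t 0) (t 1)))
    (h3 : IsTotalization k l3 (fun t => T (t 0) (t 1) (t 2))) (hT : ∀ u v w, (T u v w).1 = 0) :
    Represents k (pc 1 0 1 l2 l3 + pc 1 1 0 l2 l3 - pa (P12 4) (pc 1 1 0 l2 l3)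
      + pa (P123 4) (pc 1 1 0 l2 l3) - pc 1 0 2 l3 l2
      + pc 1 1 1 l3 l2 - pa (P12 4) (pc 1 1 1 l3 l2)
      - pc 1 2 0 l3 l2 + pa (P23 4) (pc 1 2 0 l3 l2) - pa (P132 4) (pc 1 2 0 l3 l2))
      (fun t : Fin 4 → E0 × E1 × R =>
        B (T (t 0) (t 1) (t 2)) (t 3) + B (t 0) (T (t 1) (t 2) (t 3))
        - B (t 1) (T (t 0) (t 2) (t 3)) + B (t 2) (T (t 0) (t 1) (t 3))
        - T (B (t 0) (t 1)) (t 2) (t 3) + T (t 0) (B (t 1) (t 2)) (t 3)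
        - T (t 1) (B (t 0) (t 2)) (t 3) - T (t 0) (t 1) (B (t 2) (t 3))
        + T (t 0) (t 2) (B (t 1) (t 3)) - T (t 1) (t 2) (B (t 0) (t 3))) := by
  have BT₀ : IsTotalization k (m := 4) (pc 1 0 1 l2 l3) (fun t => B (T (t 0) (t 1) (t 2)) (t 3)) :=
    h2.pc (m₁ := 0) (m₂ := 1) h3 (.inr fun _ => hT _ _ _)
  have BT₁ : IsTotalization k (m := 4) (pc 1 1 0 l2 l3) (fun t => B (t 0) (T (t 1) (t 2) (t 3))) :=
    h2.pc (m₁ := 1) (m₂ := 0) h3 (.inr fun _ => hT _ _ _)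
  have TB₀ : IsTotalization k (m := 4) (pc 1 0 2 l3 l2) (fun t => T (B (t 0) (t 1)) (t 2) (t 3)) :=
    h3.pc (m₁ := 0) (m₂ := 2) h2 (.inl ⟨0, rfl⟩)
  have TB₁ : IsTotalization k (m := 4) (pc 1 1 1 l3 l2) (fun t => T (t 0) (B (t 1) (t 2)) (t 3)) :=
    h3.pc (m₁ := 1) (m₂ := 1) h2 (.inl ⟨0, rfl⟩)
  have TB₂ : IsTotalization k (m := 4) (pc 1 2 0 l3 l2) (fun t => T (t 0) (t 1) (B (t 2) (t 3))) :=
    h3.pc (m₁ := 2) (m₂ := 0) h2 (.inl ⟨0, rfl⟩)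
  exact (((((((((BT₀.add BT₁).sub (BT₁.pa _)).add (BT₁.pa _)).sub TB₀).add TB₁).sub (TB₁.pa _)).sub
    TB₂).add (TB₂.pa _)).sub (TB₂.pa _)).represents

theorem represents_jacobi_four (h2 : IsTotalization k l2 (fun t => B (t 0) (t 1)))
    (h3 : IsTotalization k l3 (fun t => T (t 0) (t 1) (t 2))) (hT : ∀ u v w, (T u v w).1 = 0)
    (h4 : IsTotalization k l4 (fun t => U (t 0) (t 1) (t 2) (t 3))) :
    Represents k (pc 2 0 1 l2 l4 - pc 2 1 0 l2 l4 + pa (P12 5) (pc 2 1 0 l2 l4)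
      - pa (P123 5) (pc 2 1 0 l2 l4) + pa (P1234 5) (pc 2 1 0 l2 l4)
      + pc 2 0 2 l3 l3 + pc 2 1 1 l3 l3 - pa (P12 5) (pc 2 1 1 l3 l3)
      + pa (P123 5) (pc 2 1 1 l3 l3) + pc 2 2 0 l3 l3
      - pa (P23 5) (pc 2 2 0 l3 l3) + pa (P132 5) (pc 2 2 0 l3 l3)
      + pa (P234 5) (pc 2 2 0 l3 l3) - pa (P1342 5) (pc 2 2 0 l3 l3)
      + pa (P13P24 5) (pc 2 2 0 l3 l3)
      + pc 2 0 3 l4 l2 - pc 2 1 2 l4 l2 + pa (P12 5) (pc 2 1 2 l4 l2)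
      + pc 2 2 1 l4 l2 - pa (P23 5) (pc 2 2 1 l4 l2) + pa (P132 5) (pc 2 2 1 l4 l2)
      - pc 2 3 0 l4 l2 + pa (P34 5) (pc 2 3 0 l4 l2) - pa (P243 5) (pc 2 3 0 l4 l2)
      + pa (P1432 5) (pc 2 3 0 l4 l2))
      (fun t : Fin 5 → E0 × E1 × R =>
        B (U (t 0) (t 1) (t 2) (t 3)) (t 4) - B (t 0) (U (t 1) (t 2) (t 3) (t 4))
        + B (t 1) (U (t 0) (t 2) (t 3) (t 4)) - B (t 2) (U (t 0) (t 1) (t 3) (t 4))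
        + B (t 3) (U (t 0) (t 1) (t 2) (t 4))
        + T (T (t 0) (t 1) (t 2)) (t 3) (t 4) + T (t 0) (T (t 1) (t 2) (t 3)) (t 4)
        - T (t 1) (T (t 0) (t 2) (t 3)) (t 4) + T (t 2) (T (t 0) (t 1) (t 3)) (t 4)
        + T (t 0) (t 1) (T (t 2) (t 3) (t 4)) - T (t 0) (t 2) (T (t 1) (t 3) (t 4))
        + T (t 1) (t 2) (T (t 0) (t 3) (t 4)) + T (t 0) (t 3) (T (t 1) (t 2) (t 4))
        - T (t 1) (t 3) (T (t 0) (t 2) (t 4)) + T (t 2) (t 3) (T (t 0) (t 1) (t 4))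
        + U (B (t 0) (t 1)) (t 2) (t 3) (t 4) - U (t 0) (B (t 1) (t 2)) (t 3) (t 4)
        + U (t 1) (B (t 0) (t 2)) (t 3) (t 4) + U (t 0) (t 1) (B (t 2) (t 3)) (t 4)
        - U (t 0) (t 2) (B (t 1) (t 3)) (t 4) + U (t 1) (t 2) (B (t 0) (t 3)) (t 4)
        - U (t 0) (t 1) (t 2) (B (t 3) (t 4)) + U (t 0) (t 1) (t 3) (B (t 2) (t 4))
        - U (t 0) (t 2) (t 3) (B (t 1) (t 4)) + U (t 1) (t 2) (t 3) (B (t 0) (t 4))) := by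
  have BU₀ : IsTotalization k (m := 5) (pc 2 0 1 l2 l4)
      (fun t => B (U (t 0) (t 1) (t 2) (t 3)) (t 4)) :=
    h2.pc (m₁ := 0) (m₂ := 1) h4 (.inl ⟨1, rfl⟩)
  have BU₁ : IsTotalization k (m := 5) (pc 2 1 0 l2 l4)
      (fun t => B (t 0) (U (t 1) (t 2) (t 3) (t 4))) :=
    h2.pc (m₁ := 1) (m₂ := 0) h4 (.inl ⟨1, rfl⟩)
  have TT₀ : IsTotalization k (m := 5) (pc 2 0 2 l3 l3)
      (fun t => T (T (t 0) (t 1) (t 2)) (t 3) (t 4)) :=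
    h3.pc (m₁ := 0) (m₂ := 2) h3 (.inr fun _ => hT _ _ _)
  have TT₁ : IsTotalization k (m := 5) (pc 2 1 1 l3 l3)
      (fun t => T (t 0) (T (t 1) (t 2) (t 3)) (t 4)) :=
    h3.pc (m₁ := 1) (m₂ := 1) h3 (.inr fun _ => hT _ _ _)
  have TT₂ : IsTotalization k (m := 5) (pc 2 2 0 l3 l3)
      (fun t => T (t 0) (t 1) (T (t 2) (t 3) (t 4))) :=
    h3.pc (m₁ := 2) (m₂ := 0) h3 (.inr fun _ => hT _ _ _)
  have UB₀ : IsTotalization k (m := 5) (pc 2 0 3 l4 l2)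
      (fun t => U (B (t 0) (t 1)) (t 2) (t 3) (t 4)) :=
    h4.pc (m₁ := 0) (m₂ := 3) h2 (.inl ⟨0, rfl⟩)
  have UB₁ : IsTotalization k (m := 5) (pc 2 1 2 l4 l2)
      (fun t => U (t 0) (B (t 1) (t 2)) (t 3) (t 4)) :=
    h4.pc (m₁ := 1) (m₂ := 2) h2 (.inl ⟨0, rfl⟩)
  have UB₂ : IsTotalization k (m := 5) (pc 2 2 1 l4 l2)
      (fun t => U (t 0) (t 1) (B (t 2) (t 3)) (t 4)) :=
    h4.pc (m₁ := 2) (m₂ := 1) h2 (.inl ⟨0, rfl⟩)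
  have UB₃ : IsTotalization k (m := 5) (pc 2 3 0 l4 l2)
      (fun t => U (t 0) (t 1) (t 2) (B (t 3) (t 4))) :=
    h4.pc (m₁ := 3) (m₂ := 0) h2 (.inl ⟨0, rfl⟩)
  exact ((((((((((((((((((((((((BU₀.sub BU₁).add (BU₁.pa _)).sub (BU₁.pa _)).add (BU₁.pa _)).add
    TT₀).add TT₁).sub (TT₁.pa _)).add (TT₁.pa _)).add TT₂).sub (TT₂.pa _)).add (TT₂.pa _)).add
    (TT₂.pa _)).sub (TT₂.pa _)).add (TT₂.pa _)).add UB₀).sub UB₁).add (UB₁.pa _)).add UB₂).sub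
    (UB₂.pa _)).add (UB₂.pa _)).sub UB₃).add (UB₃.pa _)).sub (UB₃.pa _)).add (UB₃.pa _)).represents

end Jacobi

namespace IsLeibniz3

variable {k R E0 E1 : Type} [CommRing k] [AddCommGroup R] [AddCommGroup E0]
  [AddCommGroup E1] [Module k R] [Module k E0] [Module k E1] {C : ClwxData k R E0 E1}
  {D : MMap (cl R E0 E1) (cl R E0 E1) 1 (-1)} {l2 : MMap (cl R E0 E1) (cl R E0 E1) 2 0}
  {l3 : MMap (cl R E0 E1) (cl R E0 E1) 3 1}

theorem diff_prod {l4 : MMap (cl R E0 E1) (cl R E0 E1) 4 2} (hL : IsLeibniz3 k D l2 l3 l4)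
    (hD : Represents k D (fun t => C.diff (t 0)))
    (h2 : IsTotalization k l2 (fun t => C.prod (t 0) (t 1))) {u v : E0 × E1 × R}
    (hu : IsHomogeneous k u) (hv : IsHomogeneous k v) :
    C.diff (C.prod u v) = C.prod (C.diff u) v + C.prod (parity u) (C.diff v) := by
  have eqL1 := Represents.apply_eq (t := ![u, v])
    (Represents.bd (h := by norm_num) hD (F := C.prodMultilinear) h2.represents)
    IsTotalization.zero.represents hL.eqL1 (by simp [Fin.forall_fin_succ, hu, hv])
  simpa [ClwxData.prodMultilinear, diffAt, sub_eq_zero] using eqL1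

theorem diff_omega {l4 : MMap (cl R E0 E1) (cl R E0 E1) 4 2} (hL : IsLeibniz3 k D l2 l3 l4)
    (hD : Represents k D (fun t => C.diff (t 0)))
    (h2 : IsTotalization k l2 (fun t => C.prod (t 0) (t 1)))
    (h3 : IsTotalization k l3 (fun t => C.omega (t 0) (t 1) (t 2))) {u v w : E0 × E1 × R}
    (hu : IsHomogeneous k u) (hv : IsHomogeneous k v) (hw : IsHomogeneous k w) :
    C.diff (C.omega u v w) + (C.omega (C.diff u) v w + C.omega (parity u) (C.diff v) w
        + C.omega (parity u) (parity v) (C.diff w))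
      = C.prod u (C.prod v w) - C.prod (C.prod u v) w - C.prod v (C.prod u w) := by
  have eqL2 := Represents.apply_eq (t := ![u, v, w])
    (Represents.bd (h := by norm_num) hD (F := C.omegaMultilinear) h3.represents)
    (represents_jacobi_two h2) hL.eqL2 (by simp [Fin.forall_fin_succ, hu, hv, hw])
  simpa [ClwxData.omegaMultilinear, Fin.sum_univ_three, diffAt, sub_eq_add_neg, neg_add,
    add_comm, add_left_comm] using eqL2

theorem prod_omega (hL : IsLeibniz3 k D l2 l3 0) (hD : Represents k D (fun t => C.diff (t 0)))
    (h2 : IsTotalization k l2 (fun t => C.prod (t 0) (t 1)))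
    (h3 : IsTotalization k l3 (fun t => C.omega (t 0) (t 1) (t 2))) {u v w z : E0 × E1 × R}
    (hu : IsHomogeneous k u) (hv : IsHomogeneous k v) (hw : IsHomogeneous k w)
    (hz : IsHomogeneous k z) :
    C.prod (C.omega u v w) z + C.prod u (C.omega v w z) - C.prod v (C.omega u w z)
      + C.prod w (C.omega u v z) - C.omega (C.prod u v) w z + C.omega u (C.prod v w) z
      - C.omega v (C.prod u w) z - C.omega u v (C.prod w z) + C.omega u w (C.prod v z)
      - C.omega v w (C.prod u z) = 0 := by
  have eqL3 := Represents.apply_eq (t := ![u, v, w, z])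
    (Represents.bd (h := by norm_num) hD (F := 0) IsTotalization.zero.represents)
    (represents_jacobi_three h2 h3 fun _ _ _ => rfl) hL.eqL3
    (by simp [Fin.forall_fin_succ, hu, hv, hw, hz])
  simpa [ClwxData.diff, Prod.mk_zero_zero] using eqL3.symm

theorem leibnizLaws (hL : IsLeibniz3 k D l2 l3 0) (hD : Represents k D (fun t => C.diff (t 0)))
    (h2 : IsTotalization k l2 (fun t => C.prod (t 0) (t 1)))
    (h3 : IsTotalization k l3 (fun t => C.omega (t 0) (t 1) (t 2))) : C.LeibnizLaws where
  pd_c01 x a := by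
    simpa [ClwxData.diff, ClwxData.prod, parity] using congrArg Prod.fst
      (hL.diff_prod hD h2 (isHomogeneous_E0 k x) (isHomogeneous_E1 k a))
  c10_pd a b := by
    have diff_prod := congrArg (·.2.1) (hL.diff_prod hD h2 (isHomogeneous_E1 k a)
      (isHomogeneous_E1 k b))
    simp only [ClwxData.diff, ClwxData.prod, map_zero, LinearMap.zero_apply, add_zero, parity,
      map_neg, LinearMap.neg_apply, zero_add, Prod.mk_add_mk] at diff_prod
    linear_combination (norm := module) diff_prod
  pd_Om x y z := by
    simpa [ClwxData.diff, ClwxData.prod, ClwxData.omega, parity] using congrArg Prod.fst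
      (hL.diff_omega hD h2 h3 (isHomogeneous_E0 k x) (isHomogeneous_E0 k y) (isHomogeneous_E0 k z))
  Om_pd x y a := by
    simpa [ClwxData.diff, ClwxData.prod, ClwxData.omega, parity] using congrArg (·.2.1)
      (hL.diff_omega hD h2 h3 (isHomogeneous_E0 k x) (isHomogeneous_E0 k y) (isHomogeneous_E1 k a))
  anchor_c00 x y f := by
    have diff_omega := congrArg (·.2.2)
      (hL.diff_omega hD h2 h3 (isHomogeneous_E0 k x) (isHomogeneous_E0 k y) (isHomogeneous_R k f))
    simp only [ClwxData.diff, ClwxData.omega, map_zero, LinearMap.zero_apply, parity, neg_zero,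
      Prod.mk_add_mk, add_zero, ClwxData.prod, Prod.mk_sub_mk, sub_self] at diff_omega
    linear_combination (norm := module) diff_omega
  c01_Om x y z w := by
    simpa [ClwxData.prod, ClwxData.omega] using congrArg (·.2.1)
      (hL.prod_omega hD h2 h3 (isHomogeneous_E0 k x) (isHomogeneous_E0 k y) (isHomogeneous_E0 k z)
        (isHomogeneous_E0 k w))

end IsLeibniz3

/-! ## Skew-symmetrization -/

section Permutations

variable {T W : Type*} [AddCommGroup W]

theorem comp_perm_of_swap {n : ℕ} {F : (Fin (n + 1) → T) → W}
    (h : ∀ (t : Fin (n + 1) → T) (i : Fin n), F (t ∘ Equiv.swap i.castSucc i.succ) = -F t)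
    (σ : Equiv.Perm (Fin (n + 1))) (t : Fin (n + 1) → T) :
    F (t ∘ σ) = (Equiv.Perm.sign σ : ℤ) • F t := by
  have hσ : σ ∈ Submonoid.closure (Set.range fun i : Fin n => Equiv.swap i.castSucc i.succ) := by
    rw [Equiv.Perm.mclosure_swap_castSucc_succ]
    trivial
  induction hσ using Submonoid.closure_induction generalizing t with
  | mem x hx =>
    obtain ⟨i, rfl⟩ := hx
    rw [h, Equiv.Perm.sign_swap Fin.castSucc_lt_succ.ne]
    simp
  | one => simp
  | mul x y _ _ hx hy =>
    rw [Equiv.Perm.coe_mul, ← Function.comp_assoc, hy, hx, smul_smul, Equiv.Perm.sign_mul, mul_comm,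
      Units.val_mul]

theorem sum_sign_smul_of_swap {n : ℕ} {F : (Fin (n + 1) → T) → W}
    (h : ∀ (t : Fin (n + 1) → T) (i : Fin n), F (t ∘ Equiv.swap i.castSucc i.succ) = -F t)
    (t : Fin (n + 1) → T) :
    ∑ σ : Equiv.Perm (Fin (n + 1)), (Equiv.Perm.sign σ : ℤ) • F (t ∘ σ.symm)
      = (n + 1).factorial • F t := by
  have sign_smul (σ : Equiv.Perm (Fin (n + 1))) :
      (Equiv.Perm.sign σ : ℤ) • F (t ∘ σ.symm) = F t := by
    rw [comp_perm_of_swap h, Equiv.Perm.sign_symm, smul_smul, ← Units.val_mul,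
      Int.units_mul_self, Units.val_one, one_smul]
  rw [Finset.sum_congr rfl fun σ _ => sign_smul σ, Finset.sum_const, Finset.card_univ,
    Fintype.card_perm, Fintype.card_fin]

theorem sum_sign_smul_two (f : T → T → W) (t : Fin 2 → T) :
    ∑ σ : Equiv.Perm (Fin 2), (Equiv.Perm.sign σ : ℤ) • f (t (σ.symm 0)) (t (σ.symm 1))
      = f (t 0) (t 1) - f (t 1) (t 0) := by
  rw [show (Finset.univ : Finset (Equiv.Perm (Fin 2))) = {1, P12 2} by decide,
    Finset.sum_pair (by decide), Equiv.Perm.sign_one,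
    show Equiv.Perm.sign (P12 2) = -1 by decide, sub_eq_add_neg]
  simp only [Units.val_one, Units.val_neg, one_smul, neg_smul]
  rfl

theorem sum_sign_smul_three (f : T → T → T → W) (t : Fin 3 → T) :
    ∑ σ : Equiv.Perm (Fin 3), (Equiv.Perm.sign σ : ℤ) •
        f (t (σ.symm 0)) (t (σ.symm 1)) (t (σ.symm 2))
      = f (t 0) (t 1) (t 2) - f (t 1) (t 0) (t 2) - f (t 2) (t 1) (t 0) - f (t 0) (t 2) (t 1)
        + f (t 2) (t 0) (t 1) + f (t 1) (t 2) (t 0) := by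
  have sign_smul (σ : Equiv.Perm (Fin 3)) (ε : ℤˣ) (hε : Equiv.Perm.sign σ = ε) (a b c : Fin 3)
      (ha : σ.symm 0 = a) (hb : σ.symm 1 = b) (hc : σ.symm 2 = c) :
      (Equiv.Perm.sign σ : ℤ) • f (t (σ.symm 0)) (t (σ.symm 1)) (t (σ.symm 2))
        = (ε : ℤ) • f (t a) (t b) (t c) := by
    rw [hε, ha, hb, hc]
  rw [show (Finset.univ : Finset (Equiv.Perm (Fin 3)))
      = {1, P12 3, P13 3, P23 3, P123 3, P132 3} by decide,
    Finset.sum_insert (by decide), Finset.sum_insert (by decide), Finset.sum_insert (by decide),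
    Finset.sum_insert (by decide), Finset.sum_pair (by decide),
    sign_smul 1 1 (by decide) 0 1 2 rfl rfl rfl,
    sign_smul (P12 3) (-1) (by decide) 1 0 2 rfl rfl rfl,
    sign_smul (P13 3) (-1) (by decide) 2 1 0 rfl rfl rfl,
    sign_smul (P23 3) (-1) (by decide) 0 2 1 rfl rfl rfl,
    sign_smul (P123 3) 1 (by decide) 2 0 1 rfl rfl rfl,
    sign_smul (P132 3) 1 (by decide) 1 2 0 rfl rfl rfl]
  simp only [Units.val_one, Units.val_neg, one_smul, neg_smul]
  abel

end Permutations

section Antisymmetrization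

variable {k R E0 E1 : Type} [CommRing k] [AddCommGroup R] [AddCommGroup E0]
  [AddCommGroup E1] [Module k R] [Module k E0] [Module k E1]

theorem IsTotalization.antisymmetrize {m : ℕ} {r : ℤ} {μ : MMap (cl R E0 E1) (cl R E0 E1) m r}
    {F : (Fin m → E0 × E1 × R) → E0 × E1 × R} (hμ : IsTotalization k μ F) :
    IsTotalization k (∑ σ : Equiv.Perm (Fin m), (Equiv.Perm.sign σ : ℤ) • WL3.pa σ μ)
      (fun t => ∑ σ : Equiv.Perm (Fin m), (Equiv.Perm.sign σ : ℤ) • F (t ∘ σ.symm)) :=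
  (IsTotalization.sum _ fun σ => (hμ.pa σ).zsmul _).congr fun t => by simp

theorem IsTotalization.pa_eq {n : ℕ} {r : ℤ} {μ : MMap (cl R E0 E1) (cl R E0 E1) (n + 1) r}
    {F : (Fin (n + 1) → E0 × E1 × R) → E0 × E1 × R} (hμ : IsTotalization k μ F)
    (h : ∀ t (i : Fin n), F (t ∘ Equiv.swap i.castSucc i.succ) = -F t)
    (σ : Equiv.Perm (Fin (n + 1))) : WL3.pa σ μ = (Equiv.Perm.sign σ : ℤ) • μ :=
  (hμ.pa σ).represents.eq (hμ.zsmul _).represents fun t => by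
    rw [comp_perm_of_swap h, Equiv.Perm.sign_symm, Pi.smul_apply]

end Antisymmetrization

namespace ClwxData.PairingLaws

variable {k R E0 E1 : Type} [CommRing k] [AddCommGroup R] [AddCommGroup E0]
  [AddCommGroup E1] [Module k R] [Module k E0] [Module k E1] {C : ClwxData k R E0 E1}
  (h : C.PairingLaws)
include h

theorem quadruple_swap (t : Fin 4 → E0 × E1 × R) (i : Fin 3) :
    C.quadruple (t (Equiv.swap i.castSucc i.succ 0)) (t (Equiv.swap i.castSucc i.succ 1))
      (t (Equiv.swap i.castSucc i.succ 2)) (t (Equiv.swap i.castSucc i.succ 3))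
      = -C.quadruple (t 0) (t 1) (t 2) (t 3) := by
  fin_cases i
  · change C.quadruple (t 1) (t 0) (t 2) (t 3) = _
    simp [quadruple, h.form_swap_left (t 0).1]
  · change C.quadruple (t 0) (t 2) (t 1) (t 3) = _
    simp [quadruple, h.form_swap_mid (t 0).1 (t 1).1]
  · change C.quadruple (t 0) (t 1) (t 3) (t 2) = _
    simp [quadruple, h.form_swap_right _ _ (t 2).1 (t 3).1]

theorem omega_swap (t : Fin 3 → E0 × E1 × R) (i : Fin 2) :
    C.omega (t (Equiv.swap i.castSucc i.succ 0)) (t (Equiv.swap i.castSucc i.succ 1))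
      (t (Equiv.swap i.castSucc i.succ 2)) = -C.omega (t 0) (t 1) (t 2) := by
  fin_cases i
  · change C.omega (t 1) (t 0) (t 2) = _
    simp [omega, h.Om_swap_left (t 0).1]
  · change C.omega (t 0) (t 2) (t 1) = _
    simp [omega, h.Om_swap_right (t 0).1 (t 1).1]

theorem pairing_omega_right (u v w z : E0 × E1 × R) :
    C.pairing u (C.omega v w z) = -C.quadruple u v w z := by
  simp [pairing, omega, quadruple, S_Om, h.form_last_to_first u.1 v.1 w.1 z.1]

variable [Invertible (2 : k)]

theorem bracket_swap (t : Fin 2 → E0 × E1 × R) (i : Fin 1) :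
    C.bracket (t (Equiv.swap i.castSucc i.succ 0)) (t (Equiv.swap i.castSucc i.succ 1))
      = -C.bracket (t 0) (t 1) := by
  fin_cases i
  change C.bracket (t 1) (t 0) = _
  simp [bracket, h.c00_swap (t 0).1]

theorem triple_swap (t : Fin 3 → E0 × E1 × R) (i : Fin 2) :
    C.triple (t (Equiv.swap i.castSucc i.succ 0)) (t (Equiv.swap i.castSucc i.succ 1))
      (t (Equiv.swap i.castSucc i.succ 2)) = -C.triple (t 0) (t 1) (t 2) := by
  fin_cases i
  · change C.triple (t 1) (t 0) (t 2) = _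
    simp only [triple, h.Om_swap_left (t 0).1, h.tau_swap (t 0).1 (t 1).1,
      h.tau_swap (t 2).1 (t 0).1, h.tau_swap (t 1).1 (t 2).1, Prod.neg_mk, neg_zero]
    congr 2
    abel
  · change C.triple (t 0) (t 2) (t 1) = _
    simp only [triple, h.Om_swap_right (t 0).1 (t 1).1, h.tau_swap (t 0).1 (t 1).1,
      h.tau_swap (t 2).1 (t 0).1, h.tau_swap (t 1).1 (t 2).1, Prod.neg_mk, neg_zero]
    congr 2
    abel

theorem prod_sub_prod (u v : E0 × E1 × R) :
    ⅟(2 : k) • (C.prod u v - C.prod v u) = C.bracket u v := by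
  have := mul_invOf_self (2 : k)
  ext
  · simp only [prod, bracket, h.c00_swap u.1, Prod.smul_fst, Prod.fst_sub]
    match_scalars
    grind
  · simp only [prod, bracket, act_apply, h.c10_eq, Prod.smul_fst, Prod.fst_sub, Prod.smul_snd,
      Prod.snd_sub]
    match_scalars <;> grind
  · simp only [prod, bracket, Prod.smul_snd, Prod.snd_sub, smul_sub]

theorem sum_sign_smul_pairing_prod (t : Fin 3 → E0 × E1 × R) :
    ∑ σ : Equiv.Perm (Fin 3), (Equiv.Perm.sign σ : ℤ) •
        C.pairing (C.prod (t (σ.symm 0)) (t (σ.symm 1))) (t (σ.symm 2))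
      = (12 : k) • (C.omega (t 0) (t 1) (t 2) - C.triple (t 0) (t 1) (t 2)) := by
  have := mul_invOf_self (2 : k)
  rw [sum_sign_smul_three fun u v w => C.pairing (C.prod u v) w]
  ext
  · simp [pairing, omega, triple]
  · simp [pairing, omega, triple]
  · simp only [pairing, prod, omega, triple, Prod.snd_sub, Prod.snd_add, Prod.smul_snd, tau_apply,
      h.c10_eq, map_add, map_sub, h.S_c01, S_Dm, h.c00_swap (t 0).1 (t 1).1,
      h.c00_swap (t 1).1 (t 2).1, h.c00_swap (t 2).1 (t 0).1, map_neg, LinearMap.neg_apply]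
    match_scalars <;> grind

theorem sum_sign_smul_pairing_prod_right (t : Fin 3 → E0 × E1 × R) :
    ∑ σ : Equiv.Perm (Fin 3), (Equiv.Perm.sign σ : ℤ) •
        C.pairing (t (σ.symm 0)) (C.prod (t (σ.symm 1)) (t (σ.symm 2)))
      = (12 : k) • (C.omega (t 0) (t 1) (t 2) - C.triple (t 0) (t 1) (t 2)) := by
  rw [← h.sum_sign_smul_pairing_prod, sum_sign_smul_three fun u v w => C.pairing u (C.prod v w),
    sum_sign_smul_three fun u v w => C.pairing (C.prod u v) w]
  simp only [C.pairing_comm (t _) (C.prod _ _)]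
  abel

end ClwxData.PairingLaws

section Skew

variable {k R E0 E1 : Type} [CommRing k] [AddCommGroup R] [AddCommGroup E0]
  [AddCommGroup E1] [Module k R] [Module k E0] [Module k E1] {C : ClwxData k R E0 E1}
  {A : WeakLie3 k (cl R E0 E1)}

theorem isTotalization_skew2 [Invertible (2 : k)] (hC : C.PairingLaws)
    (h2 : IsTotalization k A.l2 (fun t => C.prod (t 0) (t 1))) :
    IsTotalization k (skew2 k A) (fun t => C.bracket (t 0) (t 1)) :=
  (h2.antisymmetrize.smul _).congr fun t =>
    (congrArg _ (sum_sign_smul_two C.prod t)).trans (hC.prod_sub_prod _ _)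

theorem isTotalization_pairing_prod (h2 : IsTotalization k A.l2 (fun t => C.prod (t 0) (t 1)))
    (h21 : IsTotalization k A.l21 (fun t => C.pairing (t 0) (t 1))) :
    IsTotalization k (m := 3) (pc 1 0 1 A.l21 A.l2)
      (fun t => C.pairing (C.prod (t 0) (t 1)) (t 2)) :=
  h21.pc (m₁ := 0) (m₂ := 1) h2 (.inl ⟨0, rfl⟩)

theorem isTotalization_antisymmetrize_pairing_prod [Invertible (2 : k)] (hC : C.PairingLaws)
    (h2 : IsTotalization k A.l2 (fun t => C.prod (t 0) (t 1)))
    (h21 : IsTotalization k A.l21 (fun t => C.pairing (t 0) (t 1))) :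
    IsTotalization k
      (∑ σ : Equiv.Perm (Fin 3), (Equiv.Perm.sign σ : ℤ) • pa σ (pc 1 0 1 A.l21 A.l2))
      (fun t => (12 : k) • (C.omega (t 0) (t 1) (t 2) - C.triple (t 0) (t 1) (t 2))) :=
  (isTotalization_pairing_prod h2 h21).antisymmetrize.congr hC.sum_sign_smul_pairing_prod

theorem isTotalization_skew3 [Invertible (2 : k)] [Invertible (3 : k)] (hC : C.PairingLaws)
    (h2 : IsTotalization k A.l2 (fun t => C.prod (t 0) (t 1)))
    (h3 : IsTotalization k A.l3 (fun t => C.omega (t 0) (t 1) (t 2)))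
    (h21 : IsTotalization k A.l21 (fun t => C.pairing (t 0) (t 1))) :
    IsTotalization k (skew3 k A) (fun t => C.triple (t 0) (t 1) (t 2)) := by
  have pairing_prod_right : IsTotalization k (m := 3) (pc 1 1 0 A.l21 A.l2)
      (fun t => C.pairing (t 0) (C.prod (t 1) (t 2))) :=
    h21.pc (m₁ := 1) (m₂ := 0) h2 (.inl ⟨0, rfl⟩)
  refine ((h3.antisymmetrize.smul _).sub (((isTotalization_pairing_prod h2 h21).add
    pairing_prod_right).antisymmetrize.smul _)).congr fun t => ?_
  have sum_omega := sum_sign_smul_of_swap (F := fun t => C.omega (t 0) (t 1) (t 2)) hC.omega_swap t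
  have sum_left := hC.sum_sign_smul_pairing_prod t
  have sum_right := hC.sum_sign_smul_pairing_prod_right t
  have two := mul_invOf_self (2 : k)
  have three := mul_invOf_self (3 : k)
  simp only [Pi.add_apply, Pi.sub_apply, Pi.smul_apply, Function.comp_apply, smul_add,
    Finset.sum_add_distrib] at sum_omega ⊢
  rw [sum_omega, sum_left, sum_right, show Nat.factorial (2 + 1) = 6 from rfl]
  match_scalars <;> grind

theorem isTotalization_pairing_omega
    (h3 : IsTotalization k A.l3 (fun t => C.omega (t 0) (t 1) (t 2)))
    (h21 : IsTotalization k A.l21 (fun t => C.pairing (t 0) (t 1))) :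
    IsTotalization k (m := 4) (pc 2 0 1 A.l21 A.l3)
      (fun t => C.quadruple (t 0) (t 1) (t 2) (t 3)) :=
  (h21.pc (m₁ := 0) (m₂ := 1) h3 (.inr fun _ => rfl)).congr fun t =>
    C.pairing_omega_left (t 0) (t 1) (t 2) (t 3)

theorem isTotalization_pairing_omega_right (hC : C.PairingLaws)
    (h3 : IsTotalization k A.l3 (fun t => C.omega (t 0) (t 1) (t 2)))
    (h21 : IsTotalization k A.l21 (fun t => C.pairing (t 0) (t 1))) :
    IsTotalization k (m := 4) (pc 2 1 0 A.l21 A.l3)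
      (fun t => -C.quadruple (t 0) (t 1) (t 2) (t 3)) :=
  (h21.pc (m₁ := 1) (m₂ := 0) h3 (.inr fun _ => rfl)).congr fun t =>
    hC.pairing_omega_right (t 0) (t 1) (t 2) (t 3)

theorem isTotalization_skew4 [Invertible (2 : k)] [Invertible (3 : k)] (hC : C.PairingLaws)
    (h2 : IsTotalization k A.l2 (fun t => C.prod (t 0) (t 1)))
    (h3 : IsTotalization k A.l3 (fun t => C.omega (t 0) (t 1) (t 2)))
    (h21 : IsTotalization k A.l21 (fun t => C.pairing (t 0) (t 1)))
    (h31 : A.l31 = 0) (h32 : A.l32 = 0) (h4 : A.l4 = 0) :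
    IsTotalization k (skew4 k A) (fun t => C.quadruple (t 0) (t 1) (t 2) (t 3)) := by
  have l31 : IsTotalization k A.l31 0 := h31 ▸ .zero
  have l32 : IsTotalization k A.l32 0 := h32 ▸ .zero
  have l4 : IsTotalization k A.l4 0 := h4 ▸ .zero
  refine ((l4.antisymmetrize.smul _).add ((((((
    (isTotalization_pairing_omega h3 h21).sub
    (l31.pc (m₁ := 0) (m₂ := 2) h2 (.inl ⟨0, rfl⟩))).add
    (l32.pc (m₁ := 1) (m₂ := 1) h2 (.inl ⟨0, rfl⟩))).sub
    (isTotalization_pairing_omega_right hC h3 h21)).sub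
    (l31.pc (m₁ := 1) (m₂ := 1) h2 (.inl ⟨0, rfl⟩))).add
    (l32.pc (m₁ := 2) (m₂ := 0) h2 (.inl ⟨0, rfl⟩))).antisymmetrize.smul _)).congr fun t => ?_
  have sum_quadruple := sum_sign_smul_of_swap
    (F := fun t => C.quadruple (t 0) (t 1) (t 2) (t 3)) hC.quadruple_swap t
  have two := mul_invOf_self (2 : k)
  have three := mul_invOf_self (3 : k)
  simp only [Pi.add_apply, Pi.sub_apply, Pi.smul_apply, Function.comp_apply, Pi.zero_apply,
    smul_zero, Finset.sum_const_zero, zero_add, add_zero, sub_zero, sub_neg_eq_add, smul_add,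
    Finset.sum_add_distrib] at sum_quadruple ⊢
  rw [sum_quadruple, show Nat.factorial (3 + 1) = 24 from rfl]
  match_scalars
  grind

end Skew

/-! ## The Lie 3-algebra -/

section Lie

variable {k R E0 E1 : Type} [CommRing k] [Invertible (2 : k)] [AddCommGroup R] [AddCommGroup E0]
  [AddCommGroup E1] [Module k R] [Module k E0] [Module k E1] {C : ClwxData k R E0 E1}

theorem ClwxData.Laws.isLeibniz3 (hC : C.Laws) {D : MMap (cl R E0 E1) (cl R E0 E1) 1 (-1)}
    {l2 : MMap (cl R E0 E1) (cl R E0 E1) 2 0} {l3 : MMap (cl R E0 E1) (cl R E0 E1) 3 1}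
    {l4 : MMap (cl R E0 E1) (cl R E0 E1) 4 2} (hD : Represents k D (fun t => C.diff (t 0)))
    (h2 : IsTotalization k l2 (fun t => C.bracket (t 0) (t 1)))
    (h3 : IsTotalization k l3 (fun t => C.triple (t 0) (t 1) (t 2)))
    (h4 : IsTotalization k l4 (fun t => C.quadruple (t 0) (t 1) (t 2) (t 3))) :
    IsLeibniz3 k D l2 l3 l4 where
  lin2 := Represents.isMultilinear (F := C.bracketMultilinear) h2.represents
  lin3 := Represents.isMultilinear (F := C.tripleMultilinear) h3.represents
  lin4 := Represents.isMultilinear (F := C.quadrupleMultilinear) h4.represents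
  eqL1 := (Represents.bd (h := by norm_num) hD (F := C.bracketMultilinear) h2.represents).eq
    IsTotalization.zero.represents fun t => by
      simp [ClwxData.bracketMultilinear, diffAt, hC.diff_bracket]
  eqL2 := (Represents.bd (h := by norm_num) hD (F := C.tripleMultilinear) h3.represents).eq
    (represents_jacobi_two h2) fun t => by
      simpa [ClwxData.tripleMultilinear, diffAt, Fin.sum_univ_three, sub_eq_add_neg, add_comm,
        add_left_comm] using hC.diff_triple (t 0) (t 1) (t 2)
  eqL3 := (Represents.bd (h := by norm_num) hD (F := C.quadrupleMultilinear) h4.represents).eq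
    (represents_jacobi_three h2 h3 fun _ _ _ => rfl) fun t => by
      simp [ClwxData.quadrupleMultilinear, diffAt, Fin.sum_univ_four, ← hC.diff_quadruple]
  eqL4 := IsTotalization.zero.represents.eq
    (represents_jacobi_four h2 h3 (fun _ _ _ => rfl) h4)
    fun t => hC.quadruple_cocycle _ _ _ _ _

end Lie

theorem skew_symmetrization_of_CLWX_general {k R E0 E1 : Type} [CommRing k] [Invertible (2 : k)]
    [Invertible (3 : k)] [AddCommGroup R] [AddCommGroup E0] [AddCommGroup E1] [Module k R]
    [Module k E0] [Module k E1] {C : ClwxData k R E0 E1} (hC : C.PairingLaws)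
    (A : WeakLie3 k (cl R E0 E1)) (hAD : A.D = mkD (fun a => C.pd a) (fun f => C.Dm f))
    (hA2 : A.l2 = mkl2 (fun x y => C.c00 x y) (fun x a => C.c01 x a) (fun a x => C.c10 a x)
      (fun x a => C.S x a) (fun f => C.Dm f))
    (hA3 : A.l3 = mkl3 (fun x y z => C.Om x y z)) (hA21 : A.l21 = mkl21 (fun x a => C.S x a))
    (hA31 : A.l31 = 0) (hA32 : A.l32 = 0) (hA4 : A.l4 = 0) :
    IsLeibniz3 k A.D (skew2 k A) (skew3 k A) (skew4 k A) ∧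
    (∀ σ : Equiv.Perm (Fin 2), pa σ (skew2 k A) = (Equiv.Perm.sign σ : ℤ) • skew2 k A) ∧
    (∀ σ : Equiv.Perm (Fin 3), pa σ (skew3 k A) = (Equiv.Perm.sign σ : ℤ) • skew3 k A) ∧
    (∀ σ : Equiv.Perm (Fin 4), pa σ (skew4 k A) = (Equiv.Perm.sign σ : ℤ) • skew4 k A) ∧
    skew2 k A = (⅟ (2 : k)) • (A.l2 - pa (P12 2) A.l2) ∧
    skew3 k A = A.l3 - (⅟ (2 : k) * ⅟ (2 : k) * ⅟ (3 : k)) •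
      ∑ σ : Equiv.Perm (Fin 3), (Equiv.Perm.sign σ : ℤ) • pa σ (pc 1 0 1 A.l21 A.l2) ∧
    skew4 k A = pc 2 0 1 A.l21 A.l3 := by
  have hD : Represents k A.D (fun t => C.diff (t 0)) := hAD ▸ represents_mkD C
  have h2 : IsTotalization k A.l2 (fun t => C.prod (t 0) (t 1)) := hA2 ▸ isTotalization_mkl2 C
  have h3 : IsTotalization k A.l3 (fun t => C.omega (t 0) (t 1) (t 2)) :=
    hA3 ▸ isTotalization_mkl3 C
  have h21 : IsTotalization k A.l21 (fun t => C.pairing (t 0) (t 1)) :=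
    hA21 ▸ isTotalization_mkl21 C
  have laws : C.Laws := { hC, IsLeibniz3.leibnizLaws (hA4 ▸ A.leib) hD h2 h3 with }
  have s2 := isTotalization_skew2 hC h2
  have s3 := isTotalization_skew3 hC h2 h3 h21
  have s4 := isTotalization_skew4 hC h2 h3 h21 hA31 hA32 hA4
  refine ⟨laws.isLeibniz3 hD s2 s3 s4, s2.pa_eq hC.bracket_swap, s3.pa_eq hC.triple_swap,
    s4.pa_eq hC.quadruple_swap, ?_, ?_,
    s4.represents.eq (isTotalization_pairing_omega h3 h21).represents fun _ => rfl⟩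
  · exact s2.represents.eq ((h2.sub (h2.pa _)).smul _).represents fun t =>
      (hC.prod_sub_prod _ _).symm
  · refine s3.represents.eq
      (h3.sub ((isTotalization_antisymmetrize_pairing_prod hC h2 h21).smul _)).represents
      fun t => ?_
    have two := mul_invOf_self (2 : k)
    have three := mul_invOf_self (3 : k)
    simp only [Pi.sub_apply, Pi.smul_apply]
    match_scalars <;> grind

/-- **Skew-symmetrization of the weak Lie 3-algebra of a CLWX 2-algebroid**: the
skew-symmetrization `λ̄` is a (semi-strict) Lie 3-algebra structure, given explicitly by
`λ̄2 = ½(λ2 - λ2^{(12)})`, `λ̄3 = Ω - (1/12)·Σ_σ sgn σ·(λ21 ∘₁ λ2)^σ` and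
`λ̄4 = λ21 ∘₁ λ3`; in particular these maps are skew-symmetric and satisfy (L1)–(L4). -/
theorem skew_symmetrization_of_CLWX
    (k : Type) [Field k] [CharZero k] [Invertible (2 : k)] [Invertible (3 : k)]
    (R : Type) [CommRing R] [Algebra k R]
    (E0 E1 : Type) [AddCommGroup E0] [AddCommGroup E1]
    [Module R E0] [Module R E1] [Module k E0] [Module k E1]
    [IsScalarTower k R E0] [IsScalarTower k R E1]
    (pd : E1 →ₗ[R] E0)
    (ρ : E0 →ₗ[k] Derivation k R R)
    (S : E0 →ₗ[k] E1 →ₗ[k] R)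
    (c00 : E0 →ₗ[k] E0 →ₗ[k] E0) (c01 : E0 →ₗ[k] E1 →ₗ[k] E1) (c10 : E1 →ₗ[k] E0 →ₗ[k] E1)
    (Om : E0 →ₗ[k] E0 →ₗ[k] E0 →ₗ[k] E1)
    (Dm : R →ₗ[k] E1)
    (hD : ∀ (x : E0) (f : R), S x (Dm f) = ρ x f)
    (hskew : ∀ x y : E0, c00 x y = - c00 y x)
    (hOm12 : ∀ x y z : E0, Om y x z = - Om x y z)
    (hOm23 : ∀ x y z : E0, Om x z y = - Om x y z)
    (hC2a : ∀ x : E0, c00 x x = 0)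
    (hC2b : ∀ (x : E0) (a : E1), c01 x a + c10 a x = (2 : k)⁻¹ • Dm (S x a + S x a))
    (hC3 : ∀ a b : E1, S (pd a) b = S (pd b) a)
    (hC4a : ∀ (x y : E0) (b : E1), ρ x (S y b) = S (c00 x y) b + S y (c01 x b))
    (hC4b : ∀ (x z : E0) (a : E1), ρ x (S z a) = S z (c01 x a) + S (c00 x z) a)
    (hC4c : ∀ (a : E1) (y z : E0), S z (c10 a y) + S y (c10 a z) = 0)
    (hC5 : ∀ x1 x2 x3 x4 : E0, S x4 (Om x1 x2 x3) = - S x3 (Om x1 x2 x4))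
    (hC6 : ∀ f : R, pd (Dm f) = 0)
    (hC7 : ∀ (x : E0) (f : R), c01 x (Dm f) = Dm (ρ x f))
    (hC8 : ∀ (f : R) (x : E0), c10 (Dm f) x = 0)
    -- the weak Lie 3-algebra associated to the CLWX 2-algebroid
    (A : WeakLie3 k (cl R E0 E1))
    (hAD : A.D = mkD (fun a => pd a) (fun f => Dm f))
    (hA2 : A.l2 = mkl2 (fun x y => c00 x y) (fun x a => c01 x a) (fun a x => c10 a x)
      (fun x a => S x a) (fun f => Dm f))
    (hA3 : A.l3 = mkl3 (fun x y z => Om x y z))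
    (hA21 : A.l21 = mkl21 (fun x a => S x a))
    (hA211 : A.l211 = 0) (hA31 : A.l31 = 0) (hA32 : A.l32 = 0) (hA4 : A.l4 = 0) :
    IsLeibniz3 k A.D (skew2 k A) (skew3 k A) (skew4 k A) ∧
    (∀ σ : Equiv.Perm (Fin 2), pa σ (skew2 k A) = (Equiv.Perm.sign σ : ℤ) • skew2 k A) ∧
    (∀ σ : Equiv.Perm (Fin 3), pa σ (skew3 k A) = (Equiv.Perm.sign σ : ℤ) • skew3 k A) ∧
    (∀ σ : Equiv.Perm (Fin 4), pa σ (skew4 k A) = (Equiv.Perm.sign σ : ℤ) • skew4 k A) ∧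
    skew2 k A = (⅟ (2 : k)) • (A.l2 - pa (P12 2) A.l2) ∧
    skew3 k A = A.l3 - (⅟ (2 : k) * ⅟ (2 : k) * ⅟ (3 : k)) •
      ∑ σ : Equiv.Perm (Fin 3), (Equiv.Perm.sign σ : ℤ) • pa σ (pc 1 0 1 A.l21 A.l2) ∧
    skew4 k A = pc 2 0 1 A.l21 A.l3 := by
  let C : ClwxData k R E0 E1 := ⟨pd.restrictScalars k, S, c00, c01, c10, Om, Dm⟩
  have c01_add_c10 (x : E0) (a : E1) : c01 x a + c10 a x = Dm (S x a) := by
    rw [hC2b, ← two_smul k, map_smul, smul_smul, inv_mul_cancel₀ two_ne_zero, one_smul]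
  have hC : C.PairingLaws :=
    { c00_swap := fun x y => hskew y x
      Om_swap_left := hOm12
      Om_swap_right := hOm23
      c01_add_c10 := c01_add_c10
      S_pd := hC3
      anchor_S := fun x y b => (hD x (S y b)).trans (hC4a x y b)
      form_swap_right := fun x y z w => hC5 x y w z
      pd_Dm := hC6
      c01_Dm := fun x f => (hC7 x f).trans (congrArg Dm (hD x f)).symm }
  exact skew_symmetrization_of_CLWX_general hC A hAD hA2 hA3 hA21 hA31 hA32 hA4

end WL3
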